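/- Let n ≥ 1 and let a_1, …, a_n : ℝ → ℝ be functions of class C^n. Suppose that for every t ∈ ℝ the monic polynomial P(t)(x) = x^n + Σ_{j=1}^n (-1)^j a_j(t) x^{n-j} is hyperbolic, i.e. all its complex roots are real. Then there exist differentiable functions λ_1, …, λ_n : ℝ → ℝ whose derivatives are locally bounded, such that for every t ∈ ℝ one has P(t)(x) = ∏_{j=1}^n (x - λ_j(t)) for all x (Bronshtein's theorem). -/

import Mathlib

/-!
Hyperbolicity survives rescaling of the variable and, by reversal and Rolle's theorem, truncation to
the terms of low degree. The sum of the squares of the roots is a nonnegative `C²` function of `t`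
with controlled second derivative, so Landau's inequality shows that roots of size `ρ` at `t = 0`
remain of size `O(ρ)` for `|t| ≤ ρ`. Rescaling roots and parameter by `ρ` normalizes that sum to `1`
while keeping all `n` derivatives of the coefficients under control; then one of the two
coefficients below the leading one is bounded away from `0`, and truncating there lowers the degree.
By induction, if `0` is a root of multiplicity `μ` at `t = 0`, then the `k`-th coefficient is
`O(|t| ^ (μ - k))` together with the corresponding derivatives, with uniform constants.

Blowing up the root gives the ordered roots locally bounded one-sided derivatives at every `t`, the
left ones being a permutation of the right ones. It remains to relabel the roots so as to undo all
these permutations. There may be infinitely many of them, but a relabelling that undoes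
finitely many exists by concatenation, and a limit of these along an ultrafilter undoes them all.
-/

open Polynomial Filter Topology Set

/-! ### Real polynomials with real roots -/

theorem splits_derivative {p : ℝ[X]} (hp : p.Splits) : (derivative p).Splits := by
  rcases Nat.eq_zero_or_pos p.natDegree with hdeg | hdeg
  · rw [derivative_of_natDegree_zero hdeg]
    exact Splits.zero
  · rw [splits_iff_card_roots]
    have rolle := card_roots_le_derivative p
    have hcard := splits_iff_card_roots.1 hp
    have hle := card_roots' (derivative p)
    have hlt := natDegree_derivative_lt hdeg.ne'
    lia

theorem splits_iterate_derivative {p : ℝ[X]} (hp : p.Splits) (m : ℕ) :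
    (derivative^[m] p).Splits := by
  induction m with
  | zero => exact hp
  | succ m ih =>
    rw [Function.iterate_succ_apply']
    exact splits_derivative ih

theorem splits_reflect_prod_X_sub_C {F : Type*} [Field F] (s : Multiset F) {N : ℕ}
    (hN : s.card ≤ N) : (reflect N (s.map fun a => X - C a).prod).Splits := by
  induction s using Multiset.induction generalizing N with
  | empty => simpa only [Multiset.map_zero, Multiset.prod_zero, reflect_one] using Splits.X_pow N
  | cons a s ih =>
    rw [Multiset.card_cons, add_comm] at hN
    obtain ⟨m, rfl⟩ : ∃ m, N = 1 + m := ⟨N - 1, by lia⟩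
    have hs : s.card ≤ m := by lia
    rw [Multiset.map_cons, Multiset.prod_cons, reflect_mul _ _ (natDegree_X_sub_C_le a)
      ((natDegree_multiset_prod_X_sub_C_eq_card s).trans_le hs)]
    refine (Splits.of_natDegree_le_one (natDegree_reflect_le.trans ?_)).mul (ih hs)
    exact max_le le_rfl (natDegree_X_sub_C_le a)

theorem splits_reflect {F : Type*} [Field F] {p : F[X]} (hp : p.Splits) {N : ℕ}
    (hN : p.natDegree ≤ N) : (reflect N p).Splits := by
  rw [hp.eq_prod_roots, reflect_C_mul]
  exact (splits_reflect_prod_X_sub_C p.roots ((card_roots' p).trans hN)).C_mul _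

/-- The rescaled polynomial `ρ⁻ᴺ p(ρx)`: if `p` has degree `N`, this keeps the leading coefficient
and divides the roots by `ρ`. -/
noncomputable def zoom (N : ℕ) (ρ : ℝ) (p : ℝ[X]) : ℝ[X] :=
  C (ρ ^ N)⁻¹ * p.comp (C ρ * X)

section zoom

variable (N : ℕ) (ρ : ℝ)

theorem coeff_zoom (p : ℝ[X]) (k : ℕ) : (zoom N ρ p).coeff k = (ρ ^ N)⁻¹ * ρ ^ k * p.coeff k := by
  rw [zoom, coeff_C_mul, comp_C_mul_X_coeff]
  ring

theorem natDegree_zoom_le (p : ℝ[X]) : (zoom N ρ p).natDegree ≤ p.natDegree :=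
  natDegree_le_iff_coeff_eq_zero.2 fun k hk => by
    rw [coeff_zoom, coeff_eq_zero_of_natDegree_lt hk, mul_zero]

theorem splits_zoom {p : ℝ[X]} (hp : p.Splits) : (zoom N ρ p).Splits :=
  (hp.comp_of_natDegree_le_one ((natDegree_C_mul_le ρ X).trans natDegree_X_le)).C_mul _

end zoom

/-- For `d ≤ N` and `deg p ≤ N`, the polynomial of degree at most `d` whose `k`-th coefficient is
a positive multiple of that of `p`. Reversing the coefficients turns truncation from above into
differentiation, so that real-rootedness is preserved. -/
noncomputable def truncation (N d : ℕ) (p : ℝ[X]) : ℝ[X] :=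
  reflect d (derivative^[N - d] (reflect N p))

section truncation

variable {N d : ℕ} {p : ℝ[X]}

theorem coeff_truncation (hd : d ≤ N) {k : ℕ} (hk : k ≤ d) :
    (truncation N d p).coeff k = (N - k).descFactorial (N - d) * p.coeff k := by
  rw [truncation, coeff_reflect, revAt_le hk, coeff_iterate_derivative, coeff_reflect,
    show d - k + (N - d) = N - k by lia, revAt_le (Nat.sub_le N k), Nat.sub_sub_self (hk.trans hd),
    nsmul_eq_mul]

theorem natDegree_iterate_derivative_reflect_le (hp : p.natDegree ≤ N) :
    (derivative^[N - d] (reflect N p)).natDegree ≤ d := by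
  have h := natDegree_iterate_derivative (reflect N p) (N - d)
  have := (natDegree_reflect_le (p := p) (N := N)).trans (max_le le_rfl hp)
  lia

theorem natDegree_truncation_le (hp : p.natDegree ≤ N) : (truncation N d p).natDegree ≤ d :=
  natDegree_reflect_le.trans (max_le le_rfl (natDegree_iterate_derivative_reflect_le hp))

theorem splits_truncation (hs : p.Splits) (hp : p.natDegree ≤ N) : (truncation N d p).Splits :=
  splits_reflect (splits_iterate_derivative (splits_reflect hs hp) _)
    (natDegree_iterate_derivative_reflect_le hp)

end truncation

theorem sum_sq_eq_esymm {R : Type*} [CommRing R] (s : Multiset R) :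
    (s.map fun x => x ^ 2).sum = s.esymm 1 ^ 2 - 2 * s.esymm 2 := by
  induction s using Multiset.induction with
  | empty => simp [Multiset.esymm, Multiset.powersetCard_zero_right]
  | cons a s ih =>
    have esymm_two : (a ::ₘ s).esymm 2 = s.esymm 2 + a * s.esymm 1 := by
      simpa [Multiset.esymm, Multiset.powersetCard_cons, Multiset.powersetCard_one] using
        Multiset.sum_map_mul_left (s := s) (a := a) (f := fun x => x)
    have esymm_one : (a ::ₘ s).esymm 1 = a + s.esymm 1 := by
      simp [Multiset.esymm, Multiset.powersetCard_one, add_comm]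
    rw [Multiset.map_cons, Multiset.sum_cons, ih, esymm_two, esymm_one]
    ring

/-- The sum of the squares of the roots of a real-rooted polynomial of degree `n + 2`, multiplied
by the square of the leading coefficient so as to be a polynomial in the coefficients. -/
def rootSqSum (n : ℕ) (p : ℝ[X]) : ℝ :=
  p.coeff (n + 1) ^ 2 - 2 * (p.coeff (n + 2) * p.coeff n)

theorem rootSqSum_eq {n : ℕ} {p : ℝ[X]} (hp : p.Splits) (hdeg : p.natDegree = n + 2) :
    rootSqSum n p = p.coeff (n + 2) ^ 2 * (p.roots.map fun x => x ^ 2).sum := by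
  have hcard := splits_iff_card_roots.1 hp
  have vieta_one := coeff_eq_esymm_roots_of_card hcard (k := n + 1) (by lia)
  have vieta_two := coeff_eq_esymm_roots_of_card hcard (k := n) (by lia)
  rw [hdeg, show n + 2 - (n + 1) = 1 by lia] at vieta_one
  rw [hdeg, Nat.add_sub_cancel_left] at vieta_two
  rw [rootSqSum, vieta_one, vieta_two, sum_sq_eq_esymm, leadingCoeff, hdeg]
  ring

theorem rootSqSum_nonneg {n : ℕ} {p : ℝ[X]} (hp : p.Splits) (hdeg : p.natDegree = n + 2) :
    0 ≤ rootSqSum n p := by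
  rw [rootSqSum_eq hp hdeg]
  refine mul_nonneg (sq_nonneg _) (Multiset.sum_nonneg fun y hy => ?_)
  obtain ⟨x, -, rfl⟩ := Multiset.mem_map.1 hy
  exact sq_nonneg x

theorem sq_coeff_mul_sq_le_rootSqSum {n : ℕ} {p : ℝ[X]} (hp : p.Splits)
    (hdeg : p.natDegree = n + 2) {z : ℝ} (hz : z ∈ p.roots) :
    p.coeff (n + 2) ^ 2 * z ^ 2 ≤ rootSqSum n p := by
  rw [rootSqSum_eq hp hdeg]
  refine mul_le_mul_of_nonneg_left (Multiset.single_le_sum (fun y hy => ?_) _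
    (Multiset.mem_map_of_mem _ hz)) (sq_nonneg _)
  obtain ⟨x, -, rfl⟩ := Multiset.mem_map.1 hy
  exact sq_nonneg x

theorem abs_coeff_le_of_abs_roots_le {p : ℝ[X]} (hp : p.Splits) {B : ℝ}
    (hB : ∀ z ∈ p.roots, |z| ≤ B) (k : ℕ) :
    |p.coeff k| ≤
      |p.leadingCoeff| * (B ^ (p.natDegree - k) * p.natDegree.choose k) := by
  rcases eq_or_ne p 0 with rfl | hp0
  · simp
  have hlead : p.leadingCoeff⁻¹ ≠ 0 := inv_ne_zero (leadingCoeff_ne_zero.2 hp0)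
  have hmonic : (C p.leadingCoeff⁻¹ * p).Monic :=
    monic_C_mul_of_mul_leadingCoeff_eq_one (inv_mul_cancel₀ (leadingCoeff_ne_zero.2 hp0))
  have hbound := coeff_le_of_roots_le (f := RingHom.id ℝ) (B := B) k hmonic
    (by simpa using hp.C_mul _) (by simpa [roots_C_mul _ hlead] using hB)
  rwa [Polynomial.map_id, natDegree_C_mul hlead, coeff_C_mul, Real.norm_eq_abs, abs_mul, abs_inv,
    inv_mul_le_iff₀ (abs_pos.2 (leadingCoeff_ne_zero.2 hp0))] at hbound

theorem abs_lt_of_isRoot_of_abs_coeff_le {p : ℝ[X]} {B z : ℝ} (hp : p ≠ 0)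
    (hB : ∀ k, |p.coeff k| ≤ B * |p.leadingCoeff|) (hz : p.IsRoot z) : |z| < B + 1 := by
  have hlead : 0 < ‖p.leadingCoeff‖₊ := nnnorm_pos.2 (leadingCoeff_ne_zero.2 hp)
  have hB0 : 0 ≤ B := nonneg_of_mul_nonneg_left
    ((abs_nonneg _).trans (hB p.natDegree)) (abs_pos.2 (leadingCoeff_ne_zero.2 hp))
  lift B to NNReal using hB0
  have hcauchy : cauchyBound p ≤ B + 1 := by
    refine add_le_add_left ?_ 1
    rw [div_le_iff₀ hlead]
    exact Finset.sup_le fun k _ => hB k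
  exact (NNReal.coe_lt_coe.2 (hz.norm_lt_cauchyBound hp)).trans_le (NNReal.coe_le_coe.2 hcauchy)

/-! ### Intermediate derivatives -/

theorem abs_sub_le_of_abs_deriv_le {f : ℝ → ℝ} (hf : Differentiable ℝ f) {a b B x y : ℝ}
    (hB : ∀ t ∈ Icc a b, |deriv f t| ≤ B) (hx : x ∈ Icc a b) (hy : y ∈ Icc a b) :
    |f y - f x| ≤ B * |y - x| :=
  (convex_Icc a b).norm_image_sub_le_of_norm_deriv_le (fun t _ => hf t) hB hx hy

theorem exists_mem_Icc_abs_iteratedDeriv_le (j : ℕ) {a b : ℝ} (hab : a < b) :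
    ∃ K : ℝ, ∀ f : ℝ → ℝ, ContDiff ℝ j f → ∀ A : ℝ, (∀ t ∈ Icc a b, |f t| ≤ A) →
      ∃ ξ ∈ Icc a b, |iteratedDeriv j f ξ| ≤ K * A := by
  induction j generalizing a b with
  | zero =>
    have ha := left_mem_Icc.2 hab.le
    exact ⟨1, fun f _ A hA => ⟨a, ha, by simpa using hA a ha⟩⟩
  | succ j ih =>
    set L := (b - a) / 3 with hL
    have hL0 : 0 < L := by linarith
    obtain ⟨K₁, h₁⟩ := ih (show a < a + L by linarith)
    obtain ⟨K₂, h₂⟩ := ih (show b - L < b by linarith)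
    refine ⟨(K₁ + K₂) / L, fun f hf A hA => ?_⟩
    have hfj : ContDiff ℝ j f := hf.of_le (mod_cast j.le_succ)
    obtain ⟨x, hx, hfx⟩ := h₁ f hfj A fun t ht => hA t ⟨ht.1, by linarith [ht.2]⟩
    obtain ⟨y, hy, hfy⟩ := h₂ f hfj A fun t ht => hA t ⟨by linarith [ht.1], ht.2⟩
    have hxy : L ≤ y - x := by linarith [hx.2, hy.1]
    have hdiff := hf.differentiable_iteratedDeriv j (mod_cast j.lt_succ_self)
    obtain ⟨ξ, hξ, hslope⟩ := exists_deriv_eq_slope (iteratedDeriv j f) (show x < y by linarith)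
      hdiff.continuous.continuousOn hdiff.differentiableOn
    refine ⟨ξ, ⟨hx.1.trans hξ.1.le, hξ.2.le.trans hy.2⟩, ?_⟩
    have hnum : |iteratedDeriv j f y - iteratedDeriv j f x| ≤ (K₁ + K₂) * A := by
      linarith [abs_sub (iteratedDeriv j f y) (iteratedDeriv j f x)]
    calc |iteratedDeriv (j + 1) f ξ|
        = |iteratedDeriv j f y - iteratedDeriv j f x| / (y - x) := by
          rw [iteratedDeriv_succ, hslope, abs_div, abs_of_pos (hL0.trans_le hxy)]
      _ ≤ (K₁ + K₂) * A / L := div_le_div₀ ((abs_nonneg _).trans hnum) hnum hL0 hxy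
      _ = (K₁ + K₂) / L * A := by ring

theorem exists_abs_iteratedDeriv_le_of_le {a b : ℝ} (hab : a < b) {n j : ℕ} (hj : j ≤ n) :
    ∃ K : ℝ, ∀ f : ℝ → ℝ, ContDiff ℝ n f → ∀ A : ℝ, (∀ t ∈ Icc a b, |f t| ≤ A) →
      (∀ t ∈ Icc a b, |iteratedDeriv n f t| ≤ A) →
        ∀ t ∈ Icc a b, |iteratedDeriv j f t| ≤ K * A := by
  induction hj using Nat.decreasingInduction with
  | self => exact ⟨1, fun f _ A _ hn t ht => by simpa using hn t ht⟩
  | of_succ j hj ih =>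
    obtain ⟨K, hK⟩ := ih
    obtain ⟨K', hK'⟩ := exists_mem_Icc_abs_iteratedDeriv_le j hab
    refine ⟨K' + K * (b - a), fun f hf A h0 hn t ht => ?_⟩
    have hderiv := hK f hf A h0 hn
    obtain ⟨ξ, hξ, hfξ⟩ := hK' f (hf.of_le (mod_cast (Nat.lt_of_succ_le hj).le)) A h0
    have hmvt := abs_sub_le_of_abs_deriv_le
      (hf.differentiable_iteratedDeriv j (mod_cast Nat.lt_of_succ_le hj))
      (fun s hs => iteratedDeriv_succ (f := f) ▸ hderiv s hs) hξ ht
    have hdist : |t - ξ| ≤ b - a := abs_sub_le_of_le_of_le ht.1 ht.2 hξ.1 hξ.2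
    have hKA : 0 ≤ K * A := (abs_nonneg _).trans (hderiv t ht)
    linarith [abs_sub_abs_le_abs_sub (iteratedDeriv j f t) (iteratedDeriv j f ξ),
      mul_le_mul_of_nonneg_left hdist hKA]

theorem exists_forall_abs_iteratedDeriv_le {a b : ℝ} (hab : a < b) (n : ℕ) :
    ∃ K : ℝ, ∀ f : ℝ → ℝ, ContDiff ℝ n f → ∀ A : ℝ, (∀ t ∈ Icc a b, |f t| ≤ A) →
      (∀ t ∈ Icc a b, |iteratedDeriv n f t| ≤ A) →
        ∀ j ≤ n, ∀ t ∈ Icc a b, |iteratedDeriv j f t| ≤ K * A := by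
  choose! K hK using fun (j : ℕ) (hj : j ≤ n) => exists_abs_iteratedDeriv_le_of_le hab hj
  obtain ⟨K', hK'⟩ := (Finset.range (n + 1)).image K |>.exists_le
  refine ⟨K', fun f hf A h0 hn j hj t ht => (hK j hj f hf A h0 hn t ht).trans ?_⟩
  have hA : 0 ≤ A := (abs_nonneg _).trans (h0 t ht)
  gcongr
  exact hK' _ (Finset.mem_image_of_mem K (Finset.mem_range_succ_iff.2 hj))

theorem iteratedDeriv_const_mul_comp_const_mul {f : ℝ → ℝ} {j : ℕ} (hf : ContDiff ℝ j f)
    (c r t : ℝ) :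
    iteratedDeriv j (fun t => c * f (r * t)) t = c * r ^ j * iteratedDeriv j f (r * t) := by
  rw [iteratedDeriv_const_mul_field, iteratedDeriv_comp_const_mul hf, mul_assoc]

theorem abs_iteratedDeriv_mul_le {f g : ℝ → ℝ} {n : ℕ} {t A B : ℝ} (hf : ContDiffAt ℝ n f t)
    (hg : ContDiffAt ℝ n g t) (hA : ∀ j ≤ n, |iteratedDeriv j f t| ≤ A)
    (hB : ∀ j ≤ n, |iteratedDeriv j g t| ≤ B) :
    |iteratedDeriv n (f * g) t| ≤ 2 ^ n * (A * B) := by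
  have hA0 : 0 ≤ A := (abs_nonneg _).trans (hA 0 n.zero_le)
  rw [iteratedDeriv_mul hf hg]
  calc |∑ i ∈ Finset.range (n + 1), n.choose i * iteratedDeriv i f t * iteratedDeriv (n - i) g t|
      ≤ ∑ i ∈ Finset.range (n + 1), n.choose i * (A * B) := by
        refine Finset.abs_sum_le_sum_abs _ _ |>.trans (Finset.sum_le_sum fun i hi => ?_)
        rw [abs_mul, abs_mul, Nat.abs_cast, mul_assoc]
        gcongr
        · exact hA i (Finset.mem_range_succ_iff.1 hi)
        · exact hB _ (Nat.sub_le n i)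
    _ = 2 ^ n * (A * B) := by
        rw [← Finset.sum_mul, ← Nat.cast_sum, Nat.sum_range_choose, Nat.cast_pow, Nat.cast_two]

theorem abs_sub_sub_deriv_mul_le {h : ℝ → ℝ} (hh : ContDiff ℝ 2 h) {B ρ t : ℝ}
    (hB : ∀ t ∈ Icc (-ρ) ρ, |iteratedDeriv 2 h t| ≤ B) (ht : t ∈ Icc (-ρ) ρ) :
    |h t - h 0 - deriv h 0 * t| ≤ B * ρ ^ 2 := by
  have hρ : 0 ≤ ρ := by linarith [ht.1, ht.2]
  have h0 : (0 : ℝ) ∈ Icc (-ρ) ρ := ⟨neg_nonpos.2 hρ, hρ⟩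
  have hB0 : 0 ≤ B := (abs_nonneg _).trans (hB 0 h0)
  have hdiff : Differentiable ℝ h := hh.differentiable two_ne_zero
  have hdiff' : Differentiable ℝ (deriv h) := by
    simpa using hh.differentiable_iteratedDeriv 1 (by norm_num)
  have hderiv : ∀ s ∈ Icc (-ρ) ρ, |deriv (fun t => h t - deriv h 0 * t) s| ≤ B * ρ := by
    intro s hs
    have hs' : deriv (fun t => h t - deriv h 0 * t) s = deriv h s - deriv h 0 := by
      rw [deriv_fun_sub (hdiff s) (by fun_prop), deriv_const_mul_id']
    rw [hs']
    calc |deriv h s - deriv h 0| ≤ B * |s - 0| := abs_sub_le_of_abs_deriv_le hdiff'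
          (by simpa only [iteratedDeriv_succ, iteratedDeriv_zero] using hB) h0 hs
      _ ≤ B * ρ := by
          rw [sub_zero]
          gcongr
          exact abs_le.2 hs
  calc |h t - h 0 - deriv h 0 * t| = |(h t - deriv h 0 * t) - (h 0 - deriv h 0 * 0)| := by ring_nf
    _ ≤ B * ρ * |t - 0| := abs_sub_le_of_abs_deriv_le (by fun_prop) hderiv h0 ht
    _ ≤ B * ρ * ρ := by
        rw [sub_zero]
        gcongr
        exact abs_le.2 ht
    _ = B * ρ ^ 2 := by ring

/- Landau's inequality: nonnegativity at `±ρ` bounds `|h'(0)|ρ` by `h(0)` and the Taylor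
remainder. -/
theorem le_mul_sq_of_nonneg_of_abs_iteratedDeriv_two_le {h : ℝ → ℝ} (hh : ContDiff ℝ 2 h)
    {B κ ρ : ℝ} (hB : ∀ t ∈ Icc (-ρ) ρ, |iteratedDeriv 2 h t| ≤ B)
    (hnonneg : ∀ t ∈ Icc (-ρ) ρ, 0 ≤ h t) (hκ : h 0 ≤ κ * ρ ^ 2) {t : ℝ} (ht : t ∈ Icc (-ρ) ρ) :
    h t ≤ 2 * (κ + B) * ρ ^ 2 := by
  have hρ : -ρ ≤ ρ := ht.1.trans ht.2
  have taylor {s : ℝ} (hs : s ∈ Icc (-ρ) ρ) := abs_le.1 (abs_sub_sub_deriv_mul_le hh hB hs)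
  have hslope : |deriv h 0 * ρ| ≤ (κ + B) * ρ ^ 2 := abs_le.2
    ⟨by linarith [(taylor (right_mem_Icc.2 hρ)).2, hnonneg ρ (right_mem_Icc.2 hρ)],
      by linarith [(taylor (left_mem_Icc.2 hρ)).2, hnonneg (-ρ) (left_mem_Icc.2 hρ)]⟩
  have hlin : deriv h 0 * t ≤ (κ + B) * ρ ^ 2 := by
    refine (le_abs_self _).trans (le_trans ?_ hslope)
    rw [abs_mul, abs_mul]
    exact mul_le_mul_of_nonneg_left ((abs_le.2 ht).trans (le_abs_self ρ)) (abs_nonneg _)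
  linarith [(taylor ht).2]

theorem tendsto_div_pow_of_iteratedDeriv_eq_zero {f : ℝ → ℝ} {m : ℕ} {x₀ : ℝ}
    (hf : ContDiff ℝ m f) (hzero : ∀ j < m, iteratedDeriv j f x₀ = 0) :
    Tendsto (fun t => f t / (t - x₀) ^ m) (𝓝[≠] x₀)
      (𝓝 (iteratedDeriv m f x₀ / m.factorial)) := by
  have htaylor (t : ℝ) :
      taylorWithinEval f m univ x₀ t = iteratedDeriv m f x₀ / m.factorial * (t - x₀) ^ m := by
    rw [taylor_within_apply, Finset.sum_range_succ, Finset.sum_eq_zero]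
    · simp only [iteratedDerivWithin_univ, smul_eq_mul]
      ring
    · intro j hj
      rw [iteratedDerivWithin_univ, hzero j (Finset.mem_range.1 hj), smul_zero]
  have hlim := (Real.taylor_tendsto convex_univ (mem_univ x₀) hf.contDiffOn).mono_left
    (nhdsWithin_mono x₀ (subset_univ {x₀}ᶜ))
  refine (zero_add (iteratedDeriv m f x₀ / m.factorial) ▸ hlim.add_const _).congr' ?_
  filter_upwards [self_mem_nhdsWithin] with t ht
  have : t - x₀ ≠ 0 := sub_ne_zero.2 ht
  rw [htaylor]
  field_simp
  ring

/-! ### Hyperbolic curves and their rescalings -/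

/-- A curve of real-rooted polynomials of degree at most `n` with `Cⁿ` coefficients; on `[-1, 1]`
their derivatives up to order `n` are bounded by `M`, and the coefficient of `xⁿ`, which need not
be `1`, is at least `c` in absolute value. -/
structure IsHyperbolicCurve (n : ℕ) (M c : ℝ) (P : ℝ → ℝ[X]) : Prop where
  natDegree_le : ∀ t, (P t).natDegree ≤ n
  splits : ∀ t, (P t).Splits
  contDiff_coeff : ∀ k ≤ n, ContDiff ℝ n fun t => (P t).coeff k
  abs_iteratedDeriv_coeff_le : ∀ k ≤ n, ∀ j ≤ n, ∀ t ∈ Icc (-1 : ℝ) 1,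
    |iteratedDeriv j (fun t => (P t).coeff k) t| ≤ M
  le_abs_coeff : ∀ t ∈ Icc (-1 : ℝ) 1, c ≤ |(P t).coeff n|

/-- The bounds at `t = 0` that Bronshtein's argument provides when `0` is a root of `P 0` of
multiplicity `μ`: the `k`-th coefficient of `P t` is `O(t ^ (μ - k))`, with a constant that is
controlled by the `μ`-th coefficient of `P 0`. -/
def BronshteinBound (μ : ℕ) (K : ℝ) (P : ℝ → ℝ[X]) : Prop :=
  ∀ k ≤ μ, (∀ j, j + k < μ → iteratedDeriv j (fun t => (P t).coeff k) 0 = 0) ∧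
    |iteratedDeriv (μ - k) (fun t => (P t).coeff k) 0| ≤ K * |(P 0).coeff μ|

namespace BronshteinBound

variable {μ : ℕ} {K : ℝ} {P : ℝ → ℝ[X]}

theorem mono {K' : ℝ} (h : BronshteinBound μ K P) (hK : K ≤ K') : BronshteinBound μ K' P :=
  fun k hk => ⟨(h k hk).1, (h k hk).2.trans (mul_le_mul_of_nonneg_right hK (abs_nonneg _))⟩

theorem zero (hK : 1 ≤ K) : BronshteinBound 0 K P := by
  intro k hk
  obtain rfl := Nat.le_zero.1 hk
  exact ⟨fun j hj => absurd hj (Nat.not_lt_zero _), by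
    simpa using le_mul_of_one_le_left (abs_nonneg ((P 0).coeff 0)) hK⟩

theorem of_coeff_eq {Q : ℝ → ℝ[X]} {Λ r : ℝ} {α : ℕ → ℝ} (h : BronshteinBound μ K Q)
    (hQ : ∀ k ≤ μ, ∀ t, (Q t).coeff k = α k * (P (r * t)).coeff k)
    (hP : ∀ k ≤ μ, ContDiff ℝ μ fun t => (P t).coeff k) (hr : 0 < r) (hα : ∀ k ≤ μ, 0 < α k)
    (hΛ : ∀ k ≤ μ, α μ ≤ Λ * (α k * r ^ (μ - k))) : BronshteinBound μ (K * Λ) P := by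
  intro k hk
  have hderiv : ∀ j ≤ μ, iteratedDeriv j (fun t => (Q t).coeff k) 0 =
      α k * r ^ j * iteratedDeriv j (fun t => (P t).coeff k) 0 := fun j hj => by
    simp only [hQ k hk, iteratedDeriv_const_mul_comp_const_mul
      ((hP k hk).of_le (show (j : WithTop ℕ∞) ≤ μ from mod_cast hj)), mul_zero]
  have hαk := hα k hk
  have hαr : 0 < α k * r ^ (μ - k) := by positivity
  constructor
  · intro j hj
    have hzero := (h k hk).1 j hj
    rw [hderiv j (by lia)] at hzero
    exact (mul_eq_zero.1 hzero).resolve_left (by positivity)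
  · have hbound := (h k hk).2
    rw [hderiv _ (Nat.sub_le μ k), hQ μ le_rfl 0, mul_zero, abs_mul, abs_of_pos hαr, abs_mul,
      abs_of_pos (hα μ le_rfl), mul_left_comm] at hbound
    have hK : 0 ≤ K * |(P 0).coeff μ| :=
      nonneg_of_mul_nonneg_right ((mul_nonneg hαr.le (abs_nonneg _)).trans hbound) (hα μ le_rfl)
    refine le_of_mul_le_mul_left ?_ hαr
    calc α k * r ^ (μ - k) * |iteratedDeriv (μ - k) (fun t => (P t).coeff k) 0|
        ≤ α μ * (K * |(P 0).coeff μ|) := hbound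
      _ ≤ Λ * (α k * r ^ (μ - k)) * (K * |(P 0).coeff μ|) := by gcongr; exact hΛ k hk
      _ = α k * r ^ (μ - k) * (K * Λ * |(P 0).coeff μ|) := by ring

theorem of_zoom {N : ℕ} {ρ : ℝ} (h : BronshteinBound μ K fun t => zoom N ρ (P (ρ * t)))
    (hP : ∀ k ≤ μ, ContDiff ℝ μ fun t => (P t).coeff k) (hρ : 0 < ρ) : BronshteinBound μ K P := by
  refine mul_one K ▸ h.of_coeff_eq (α := fun k => (ρ ^ N)⁻¹ * ρ ^ k)
    (fun k _ t => coeff_zoom N ρ _ k) hP hρ (fun k _ => by positivity) fun k hk => le_of_eq ?_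
  rw [one_mul, mul_assoc, ← pow_add, Nat.add_sub_cancel' hk]

theorem of_truncation {N d : ℕ} {δ : ℝ}
    (h : BronshteinBound μ K fun t => truncation N d (P (δ * t)))
    (hP : ∀ k ≤ μ, ContDiff ℝ μ fun t => (P t).coeff k) (hμ : μ ≤ d) (hd : d ≤ N)
    (hδ : δ ∈ Ioc 0 1) : BronshteinBound μ (K * (N ^ (N - d) / δ ^ d)) P := by
  obtain ⟨hδ0, hδ1⟩ := hδ
  refine h.of_coeff_eq (α := fun k => (N - k).descFactorial (N - d))
    (fun k hk t => coeff_truncation hd (hk.trans hμ)) hP hδ0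
    (fun k hk => mod_cast Nat.descFactorial_pos.2 (by lia)) fun k hk => ?_
  have hpos : (1 : ℝ) ≤ (N - k).descFactorial (N - d) :=
    mod_cast Nat.descFactorial_pos.2 (by lia)
  have hpow : δ ^ d ≤ δ ^ (μ - k) := pow_le_pow_of_le_one hδ0.le hδ1 (by lia)
  calc ((N - μ).descFactorial (N - d) : ℝ) ≤ (N : ℝ) ^ (N - d) := mod_cast
        (Nat.descFactorial_le_pow _ _).trans (Nat.pow_le_pow_left (Nat.sub_le N μ) _)
    _ = N ^ (N - d) / δ ^ d * (1 * δ ^ d) := by field_simp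
    _ ≤ N ^ (N - d) / δ ^ d * ((N - k).descFactorial (N - d) * δ ^ (μ - k)) := by gcongr

end BronshteinBound

namespace IsHyperbolicCurve

variable {n : ℕ} {M c : ℝ} {P : ℝ → ℝ[X]}

theorem abs_coeff_le (h : IsHyperbolicCurve n M c P) {k : ℕ} (hk : k ≤ n) {t : ℝ}
    (ht : t ∈ Icc (-1 : ℝ) 1) : |(P t).coeff k| ≤ M := by
  simpa using h.abs_iteratedDeriv_coeff_le k hk 0 n.zero_le t ht

theorem natDegree_eq (h : IsHyperbolicCurve n M c P) (hc : 0 < c) {t : ℝ}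
    (ht : t ∈ Icc (-1 : ℝ) 1) : (P t).natDegree = n :=
  (h.natDegree_le t).antisymm
    (le_natDegree_of_ne_zero (abs_pos.1 (hc.trans_le (h.le_abs_coeff t ht))))

theorem contDiff_coeff_of_le (h : IsHyperbolicCurve n M c P) {m k : ℕ} (hm : m ≤ n) (hk : k ≤ n) :
    ContDiff ℝ m fun t => (P t).coeff k :=
  (h.contDiff_coeff k hk).of_le (mod_cast hm)

theorem contDiff_rootSqSum (h : IsHyperbolicCurve (n + 2) M c P) :
    ContDiff ℝ 2 fun t => rootSqSum n (P t) :=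
  ((h.contDiff_coeff_of_le (m := 2) (by lia) (by lia)).pow 2).sub
    (contDiff_const.mul ((h.contDiff_coeff_of_le (m := 2) (by lia) le_rfl).mul
      (h.contDiff_coeff_of_le (m := 2) (by lia) (by lia))))

theorem abs_iteratedDeriv_two_rootSqSum_le (h : IsHyperbolicCurve (n + 2) M c P) {t : ℝ}
    (ht : t ∈ Icc (-1 : ℝ) 1) : |iteratedDeriv 2 (fun t => rootSqSum n (P t)) t| ≤ 12 * M ^ 2 := by
  have hmul {i k : ℕ} (hi : i ≤ n + 2) (hk : k ≤ n + 2) :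
      |iteratedDeriv 2 ((fun t => (P t).coeff i) * fun t => (P t).coeff k) t| ≤ 4 * (M * M) := by
    refine (abs_iteratedDeriv_mul_le
      (h.contDiff_coeff_of_le (m := 2) (by lia) hi).contDiffAt
      (h.contDiff_coeff_of_le (m := 2) (by lia) hk).contDiffAt
      (fun j hj => h.abs_iteratedDeriv_coeff_le i hi j (by lia) t ht)
      (fun j hj => h.abs_iteratedDeriv_coeff_le k hk j (by lia) t ht)).trans_eq (by norm_num)
  have hdiff {i k : ℕ} (hi : i ≤ n + 2) (hk : k ≤ n + 2) :
      ContDiffAt ℝ 2 ((fun t => (P t).coeff i) * fun t => (P t).coeff k) t :=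
    ((h.contDiff_coeff_of_le (by lia) hi).mul (h.contDiff_coeff_of_le (by lia) hk)).contDiffAt
  have hsq := hmul (i := n + 1) (k := n + 1) (by lia) (by lia)
  have hcross := hmul (i := n + 2) (k := n) le_rfl (by lia)
  have hsplit : (fun t => rootSqSum n (P t)) =
      (fun t => (P t).coeff (n + 1)) * (fun t => (P t).coeff (n + 1)) -
        fun t => 2 * ((fun t => (P t).coeff (n + 2)) * fun t => (P t).coeff n) t := by
    funext t
    simp only [rootSqSum, Pi.sub_apply, Pi.mul_apply, sq]
  rw [hsplit, iteratedDeriv_sub (hdiff (by lia) (by lia))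
    (contDiffAt_const.mul (hdiff le_rfl (by lia))), iteratedDeriv_const_mul_field]
  rw [abs_le] at hsq hcross ⊢
  constructor <;> linarith

theorem abs_root_le (h : IsHyperbolicCurve (n + 2) M c P) (hc : 0 < c) {κ ρ : ℝ}
    (hρ : ρ ∈ Ioc (0 : ℝ) 1) (hκ : rootSqSum n (P 0) ≤ κ * ρ ^ 2) {t : ℝ} (ht : t ∈ Icc (-ρ) ρ)
    {z : ℝ} (hz : z ∈ (P t).roots) : |z| ≤ √(2 * (κ + 12 * M ^ 2)) / c * ρ := by
  have hsub : Icc (-ρ) ρ ⊆ Icc (-1) 1 := Icc_subset_Icc (neg_le_neg hρ.2) hρ.2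
  have hlandau : rootSqSum n (P t) ≤ 2 * (κ + 12 * M ^ 2) * ρ ^ 2 :=
    le_mul_sq_of_nonneg_of_abs_iteratedDeriv_two_le h.contDiff_rootSqSum
      (fun s hs => h.abs_iteratedDeriv_two_rootSqSum_le (hsub hs))
      (fun s hs => rootSqSum_nonneg (h.splits s) (h.natDegree_eq hc (hsub hs))) hκ ht
  have hsq : (c * z) ^ 2 ≤ 2 * (κ + 12 * M ^ 2) * ρ ^ 2 := calc
    (c * z) ^ 2 ≤ (P t).coeff (n + 2) ^ 2 * z ^ 2 := by
      rw [mul_pow, ← sq_abs ((P t).coeff (n + 2))]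
      have := h.le_abs_coeff t (hsub ht)
      gcongr
    _ ≤ rootSqSum n (P t) :=
      sq_coeff_mul_sq_le_rootSqSum (h.splits t) (h.natDegree_eq hc (hsub ht)) hz
    _ ≤ 2 * (κ + 12 * M ^ 2) * ρ ^ 2 := hlandau
  have habs := Real.abs_le_sqrt hsq
  rw [Real.sqrt_mul' _ (sq_nonneg ρ), Real.sqrt_sq hρ.1.le, abs_mul, abs_of_pos hc] at habs
  rwa [div_mul_eq_mul_div, le_div_iff₀ hc, mul_comm]

theorem bound_nonneg (h : IsHyperbolicCurve n M c P) : 0 ≤ M :=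
  (abs_nonneg _).trans (h.abs_coeff_le n.zero_le (t := 0) (by simp))

theorem iteratedDeriv_coeff_zoom (h : IsHyperbolicCurve n M c P) {j k : ℕ} (hj : j ≤ n)
    (hk : k ≤ n) (ρ t : ℝ) :
    iteratedDeriv j (fun t => (zoom n ρ (P (ρ * t))).coeff k) t =
      (ρ ^ n)⁻¹ * ρ ^ k * ρ ^ j * iteratedDeriv j (fun t => (P t).coeff k) (ρ * t) := by
  simp only [coeff_zoom, iteratedDeriv_const_mul_comp_const_mul (h.contDiff_coeff_of_le hj hk)]

theorem abs_coeff_zoom_le (h : IsHyperbolicCurve (n + 2) M c P) (hc : 0 < c) {κ ρ : ℝ}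
    (hρ : ρ ∈ Ioc (0 : ℝ) 1) (hκ : rootSqSum n (P 0) ≤ κ * ρ ^ 2) (k : ℕ) {t : ℝ}
    (ht : t ∈ Icc (-ρ) ρ) :
    |(zoom (n + 2) ρ (P t)).coeff k| ≤
      M * ((1 + √(2 * (κ + 12 * M ^ 2)) / c) ^ (n + 2) * 2 ^ (n + 2)) := by
  set R := √(2 * (κ + 12 * M ^ 2)) / c
  have hR0 : 0 ≤ R := by positivity
  have ht1 : t ∈ Icc (-1 : ℝ) 1 := Icc_subset_Icc (neg_le_neg hρ.2) hρ.2 ht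
  have hlead : (zoom (n + 2) ρ (P t)).coeff (n + 2) = (P t).coeff (n + 2) := by
    rw [coeff_zoom, inv_mul_cancel₀ (pow_pos hρ.1 _).ne', one_mul]
  have hdeg : (zoom (n + 2) ρ (P t)).natDegree = n + 2 :=
    ((natDegree_zoom_le _ _ _).trans (h.natDegree_le t)).antisymm <| le_natDegree_of_ne_zero <| by
      rw [hlead]
      exact abs_pos.1 (hc.trans_le (h.le_abs_coeff t ht1))
  have hroots : ∀ z ∈ (zoom (n + 2) ρ (P t)).roots, |z| ≤ R := by
    intro z hz
    have hroot : (P t).eval (ρ * z) = 0 := by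
      have := (mem_roots'.1 hz).2
      simpa [zoom, IsRoot, hρ.1.ne'] using this
    have hP : P t ≠ 0 := by
      rintro h0
      simp [h0, zoom] at hz
    have := h.abs_root_le hc hρ hκ ht ((mem_roots hP).2 hroot)
    rwa [abs_mul, abs_of_pos hρ.1, mul_comm, mul_le_mul_iff_left₀ hρ.1] at this
  refine (abs_coeff_le_of_abs_roots_le (splits_zoom _ ρ (h.splits t)) hroots k).trans ?_
  rw [leadingCoeff, hdeg, hlead]
  have hchoose : ((n + 2).choose k : ℝ) ≤ 2 ^ (n + 2) := mod_cast Nat.choose_le_two_pow _ _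
  have hpow : R ^ (n + 2 - k) ≤ (1 + R) ^ (n + 2) :=
    (pow_le_pow_left₀ hR0 (by linarith) _).trans (pow_le_pow_right₀ (by linarith) (by lia))
  have := h.abs_coeff_le le_rfl ht1
  have := h.bound_nonneg
  gcongr

/- The roots of `P 0` are of size at most `√κ ρ / c`, so by Landau's inequality for `rootSqSum` the
roots of `P t` are of size `O(ρ)` as long as `|t| ≤ ρ`: zooming by `ρ` in both variables leaves a
curve of the same kind. -/
theorem exists_zoom (n : ℕ) (M κ : ℝ) {c : ℝ} (hc : 0 < c) :
    ∃ M' : ℝ, ∀ P, IsHyperbolicCurve (n + 2) M c P → ∀ ρ ∈ Ioc (0 : ℝ) 1,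
      rootSqSum n (P 0) ≤ κ * ρ ^ 2 →
        IsHyperbolicCurve (n + 2) M' c fun t => zoom (n + 2) ρ (P (ρ * t)) := by
  obtain ⟨K, hK⟩ := exists_forall_abs_iteratedDeriv_le (neg_lt_self one_pos) (n + 2)
  set R := √(2 * (κ + 12 * M ^ 2)) / c
  refine ⟨K * (M * ((1 + R) ^ (n + 2) * 2 ^ (n + 2))), fun P hP ρ hρ hκ => ?_⟩
  have hR0 : 0 ≤ R := by positivity
  have hρ0 : 0 < ρ := hρ.1
  have hmem {t : ℝ} (ht : t ∈ Icc (-1 : ℝ) 1) : ρ * t ∈ Icc (-ρ) ρ :=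
    ⟨by nlinarith [ht.1], by nlinarith [ht.2]⟩
  have hmem1 {t : ℝ} (ht : t ∈ Icc (-1 : ℝ) 1) : ρ * t ∈ Icc (-1 : ℝ) 1 :=
    Icc_subset_Icc (neg_le_neg hρ.2) hρ.2 (hmem ht)
  have hsmooth :
      ∀ k ≤ n + 2, ContDiff ℝ ↑(n + 2) fun t => (zoom (n + 2) ρ (P (ρ * t))).coeff k := by
    intro k hk
    simp only [coeff_zoom]
    exact contDiff_const.mul ((hP.contDiff_coeff k hk).comp (contDiff_const.mul contDiff_id))
  refine ⟨fun t => (natDegree_zoom_le _ _ _).trans (hP.natDegree_le _),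
    fun t => splits_zoom _ _ (hP.splits _), hsmooth, fun k hk => ?_, fun t ht => ?_⟩
  · refine hK _ (hsmooth k hk) _ (fun t ht => hP.abs_coeff_zoom_le hc hρ hκ k (hmem ht))
      fun t ht => ?_
    have hfactor : 1 ≤ (1 + R) ^ (n + 2) * 2 ^ (n + 2) :=
      one_le_mul_of_one_le_of_one_le (one_le_pow₀ (by linarith)) (one_le_pow₀ one_le_two)
    rw [hP.iteratedDeriv_coeff_zoom le_rfl hk, mul_right_comm (ρ ^ (n + 2))⁻¹,
      inv_mul_cancel₀ (by positivity), one_mul, abs_mul, abs_of_pos (pow_pos hρ0 k)]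
    exact (mul_le_of_le_one_left (abs_nonneg _) (pow_le_one₀ hρ0.le hρ.2)).trans
      ((hP.abs_iteratedDeriv_coeff_le k hk _ le_rfl _ (hmem1 ht)).trans
        (le_mul_of_one_le_right hP.bound_nonneg hfactor))
  · rw [coeff_zoom, inv_mul_cancel₀ (by positivity), one_mul]
    exact hP.le_abs_coeff _ (hmem1 ht)

theorem half_le_abs_coeff {d : ℕ} (h : IsHyperbolicCurve n M c P) (hd : d < n) {b δ t : ℝ}
    (hδ : δ ∈ Ioc (0 : ℝ) 1) (hMδ : M * δ ≤ b / 2) (hb : b ≤ |(P 0).coeff d|)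
    (ht : t ∈ Icc (-δ) δ) : b / 2 ≤ |(P t).coeff d| := by
  have hsub : Icc (-δ) δ ⊆ Icc (-1 : ℝ) 1 := Icc_subset_Icc (neg_le_neg hδ.2) hδ.2
  have hmvt : |(P t).coeff d - (P 0).coeff d| ≤ M * |t - 0| :=
    abs_sub_le_of_abs_deriv_le ((h.contDiff_coeff d hd.le).differentiable (mod_cast by lia))
      (fun s hs => by simpa using h.abs_iteratedDeriv_coeff_le d hd.le 1 (by lia) s hs)
      (by simp) (hsub ht)
  have hlip : M * |t - 0| ≤ M * δ :=
    mul_le_mul_of_nonneg_left ((sub_zero t).symm ▸ abs_le.2 ht) h.bound_nonneg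
  linarith [abs_sub_abs_le_abs_sub ((P 0).coeff d) ((P t).coeff d),
    abs_sub_comm ((P 0).coeff d) ((P t).coeff d)]

theorem truncation {d : ℕ} (h : IsHyperbolicCurve n M c P) (hd : d < n) {b δ : ℝ}
    (hδ : δ ∈ Ioc (0 : ℝ) 1) (hMδ : M * δ ≤ b / 2) (hb : b ≤ |(P 0).coeff d|) :
    IsHyperbolicCurve d (n ^ (n - d) * M) (b / 2) fun t => truncation n d (P (δ * t)) := by
  obtain ⟨hδ0, hδ1⟩ := hδ
  have := h.bound_nonneg
  have hmem {t : ℝ} (ht : t ∈ Icc (-1 : ℝ) 1) : δ * t ∈ Icc (-δ) δ :=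
    ⟨by nlinarith [ht.1], by nlinarith [ht.2]⟩
  have hpos : (1 : ℝ) ≤ (n - d).descFactorial (n - d) := mod_cast Nat.descFactorial_pos.2 le_rfl
  refine ⟨fun t => natDegree_truncation_le (h.natDegree_le _),
    fun t => splits_truncation (h.splits _) (h.natDegree_le _), fun k hk => ?_,
    fun k hk j hj t ht => ?_, fun t ht => ?_⟩
  · simp only [coeff_truncation hd.le hk]
    exact contDiff_const.mul ((h.contDiff_coeff_of_le hd.le (hk.trans hd.le)).comp
      (contDiff_const.mul contDiff_id))
  · have hδt : δ * t ∈ Icc (-1 : ℝ) 1 := Icc_subset_Icc (neg_le_neg hδ1) hδ1 (hmem ht)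
    have hfactor : ((n - k).descFactorial (n - d) : ℝ) ≤ n ^ (n - d) := mod_cast
      (Nat.descFactorial_le_pow _ _).trans (Nat.pow_le_pow_left (Nat.sub_le n k) _)
    have hpow : δ ^ j ≤ 1 := pow_le_one₀ hδ0.le hδ1
    have hderiv := h.abs_iteratedDeriv_coeff_le k (hk.trans hd.le) j (hj.trans hd.le) _ hδt
    simp only [coeff_truncation hd.le hk, iteratedDeriv_const_mul_comp_const_mul
      (h.contDiff_coeff_of_le (hj.trans hd.le) (hk.trans hd.le))]
    rw [abs_mul, abs_of_nonneg (by positivity)]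
    calc _ ≤ (n : ℝ) ^ (n - d) * 1 * M := by gcongr
      _ = n ^ (n - d) * M := by rw [mul_one]
  · rw [coeff_truncation hd.le le_rfl, abs_mul, Nat.abs_cast]
    exact (h.half_le_abs_coeff hd ⟨hδ0, hδ1⟩ hMδ hb (hmem ht)).trans
      (le_mul_of_one_le_left (abs_nonneg _) hpos)

theorem bronshteinBound_of_vanish (h : IsHyperbolicCurve n M c P) (hc : 0 < c)
    (hvanish : ∀ k j, j + k < n → iteratedDeriv j (fun t => (P t).coeff k) 0 = 0) :
    BronshteinBound n (M / c) P := by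
  intro k hk
  have h0 : (0 : ℝ) ∈ Icc (-1 : ℝ) 1 := by simp
  refine ⟨fun j => hvanish k j,
    (h.abs_iteratedDeriv_coeff_le k hk _ (Nat.sub_le n k) 0 h0).trans ?_⟩
  have := h.bound_nonneg
  calc M = M / c * c := by field_simp
    _ ≤ M / c * |(P 0).coeff n| := by gcongr; exact h.le_abs_coeff 0 h0

/- If all zooms stay bounded, then `j`-th derivatives of the `k`-th coefficient are `O(ρ)` for
every `ρ` when `j + k < n`. -/
theorem bronshteinBound_of_forall_zoom (h : IsHyperbolicCurve n M c P) (hc : 0 < c) {M' : ℝ}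
    (hzoom : ∀ ρ ∈ Ioc (0 : ℝ) 1, IsHyperbolicCurve n M' c fun t => zoom n ρ (P (ρ * t))) :
    BronshteinBound n (M / c) P := by
  refine h.bronshteinBound_of_vanish hc fun k j hjk => ?_
  have hbound : ∀ ρ ∈ Ioc (0 : ℝ) 1, |iteratedDeriv j (fun t => (P t).coeff k) 0| ≤ M' * ρ := by
    intro ρ hρ
    have hρ0 : 0 < ρ := hρ.1
    have hder := (hzoom ρ hρ).abs_iteratedDeriv_coeff_le k (by lia) j (by lia) 0 (by simp)
    rw [h.iteratedDeriv_coeff_zoom (by lia) (by lia), mul_zero, abs_mul, mul_assoc _ (ρ ^ k),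
      ← pow_add, abs_of_pos (by positivity), mul_assoc, inv_mul_le_iff₀ (by positivity)] at hder
    have hM' := (hzoom ρ hρ).bound_nonneg
    refine le_of_mul_le_mul_left (hder.trans ?_) (pow_pos hρ0 (k + j))
    calc ρ ^ n * M' ≤ ρ ^ (k + j + 1) * M' :=
          mul_le_mul_of_nonneg_right (pow_le_pow_of_le_one hρ0.le hρ.2 (by lia)) hM'
      _ = ρ ^ (k + j) * (M' * ρ) := by ring
  have hlim : Tendsto (fun ρ => M' * ρ) (𝓝[>] 0) (𝓝 0) := by
    simpa using (tendsto_id.const_mul M').mono_left (nhdsWithin_le_nhds (a := (0 : ℝ)))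
  exact abs_nonpos_iff.1 (ge_of_tendsto hlim
    (eventually_of_mem (Ioc_mem_nhdsGT one_pos) hbound))

end IsHyperbolicCurve

/-- Bronshtein's bounds in degree `n`: the constant depends only on the bounds that define the
class of hyperbolic curves. -/
def HasBronshteinBound (n : ℕ) : Prop :=
  ∀ M c : ℝ, 0 < c → ∃ K : ℝ, ∀ P, IsHyperbolicCurve n M c P →
    ∀ μ, (∀ k < μ, (P 0).coeff k = 0) → (P 0).coeff μ ≠ 0 → BronshteinBound μ K P

theorem HasBronshteinBound.exists_of_truncation {d N : ℕ} (hd : d < N)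
    (ih : HasBronshteinBound d) (M : ℝ) {b : ℝ} (hb : 0 < b) :
    ∃ K : ℝ, ∀ c P, IsHyperbolicCurve N M c P → b ≤ |(P 0).coeff d| →
      ∀ μ, (∀ k < μ, (P 0).coeff k = 0) → (P 0).coeff μ ≠ 0 → BronshteinBound μ K P := by
  obtain ⟨δ, hδ, hMδ⟩ : ∃ δ ∈ Ioc (0 : ℝ) 1, M * δ ≤ b / 2 := by
    refine ⟨b / (2 * (|M| + b)), ⟨by positivity, (div_le_one (by positivity)).2 (by
      linarith [abs_nonneg M])⟩, ?_⟩
    rw [mul_div_assoc', div_le_div_iff₀ (by positivity) two_pos]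
    nlinarith [le_abs_self M]
  obtain ⟨K, hK⟩ := ih (N ^ (N - d) * M) (b / 2) (half_pos hb)
  refine ⟨K * (N ^ (N - d) / δ ^ d), fun c P hP hbd μ hzero hμ => ?_⟩
  have hμd : μ ≤ d := by
    by_contra! hlt
    rw [hzero d hlt, abs_zero] at hbd
    exact hbd.not_gt hb
  have hfactor : ((N - μ).descFactorial (N - d) : ℝ) ≠ 0 :=
    mod_cast (Nat.descFactorial_pos.2 (by lia)).ne'
  have htrunc := hK _ (hP.truncation hd hδ hMδ hbd) μ
    (fun k hk => by
      rw [mul_zero, coeff_truncation hd.le (hk.le.trans hμd), hzero k hk, mul_zero])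
    (by rw [mul_zero, coeff_truncation hd.le hμd]; exact mul_ne_zero hfactor hμ)
  exact htrunc.of_truncation
    (fun k hk => hP.contDiff_coeff_of_le (hμd.trans hd.le) (hk.trans (hμd.trans hd.le)))
    hμd hd.le hδ

theorem rootSqSum_zoom (n : ℕ) {ρ : ℝ} (hρ : ρ ≠ 0) (p : ℝ[X]) :
    rootSqSum n (zoom (n + 2) ρ p) = rootSqSum n p / ρ ^ 2 := by
  simp only [rootSqSum, coeff_zoom]
  field_simp
  ring

theorem rootSqSum_le {n : ℕ} {M : ℝ} {p : ℝ[X]} (h : ∀ k ≤ n + 2, |p.coeff k| ≤ M) :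
    rootSqSum n p ≤ 3 * M ^ 2 := by
  have hM : 0 ≤ M := (abs_nonneg _).trans (h 0 (by lia))
  have hsq : p.coeff (n + 1) ^ 2 ≤ M ^ 2 := sq_le_sq.2 ((h _ (by lia)).trans (le_abs_self M))
  have hmul : |p.coeff (n + 2) * p.coeff n| ≤ M * M := by
    rw [abs_mul]
    exact mul_le_mul (h _ le_rfl) (h n (by lia)) (abs_nonneg _) hM
  rw [rootSqSum]
  linarith [neg_le_of_abs_le hmul]

theorem le_abs_coeff_of_one_le_rootSqSum {n : ℕ} {M : ℝ} {p : ℝ[X]}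
    (hM : |p.coeff (n + 2)| ≤ M) (h : 1 ≤ rootSqSum n p) :
    1 / 2 ≤ |p.coeff (n + 1)| ∨ 1 / (4 * (M + 1)) ≤ |p.coeff n| := by
  have hM0 : 0 ≤ M := (abs_nonneg _).trans hM
  by_contra! hsmall
  have hsq : p.coeff (n + 1) ^ 2 ≤ (1 / 2) ^ 2 :=
    sq_le_sq.2 (hsmall.1.le.trans (le_abs_self _))
  have hmul : |p.coeff (n + 2) * p.coeff n| ≤ (M + 1) * (1 / (4 * (M + 1))) := by
    rw [abs_mul]
    exact mul_le_mul (hM.trans (by linarith)) hsmall.2.le (abs_nonneg _) (by linarith)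
  have hquarter : (M + 1) * (1 / (4 * (M + 1))) = 1 / 4 := by field_simp
  rw [hquarter] at hmul
  rw [rootSqSum] at h
  linarith [neg_le_of_abs_le hmul]

theorem coeff_eq_zero_of_rootSqSum_nonpos {n k : ℕ} {p : ℝ[X]} (hp : p.Splits)
    (hdeg : p.natDegree = n + 2) (h : rootSqSum n p ≤ 0) (hk : k < n + 2) : p.coeff k = 0 := by
  have hlead : p.coeff (n + 2) ≠ 0 := by
    rw [← hdeg, coeff_natDegree, leadingCoeff_ne_zero]
    rintro rfl
    simp at hdeg
  have hroots : ∀ z ∈ p.roots, |z| ≤ 0 := fun z hz => by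
    have hsq := (sq_coeff_mul_sq_le_rootSqSum hp hdeg hz).trans h
    rw [← mul_pow, sq_nonpos_iff, mul_eq_zero] at hsq
    rw [hsq.resolve_left hlead, abs_zero]
  have hcoeff := abs_coeff_le_of_abs_roots_le hp hroots k
  rwa [hdeg, zero_pow (by lia), zero_mul, mul_zero, abs_nonpos_iff] at hcoeff

theorem exists_mem_Ioc_sq_le {h C : ℝ} (h0 : 0 < h) (hC : h ≤ C) :
    ∃ ρ ∈ Ioc (0 : ℝ) 1, ρ ^ 2 ≤ h ∧ h ≤ (1 + C) * ρ ^ 2 := by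
  rcases le_total h 1 with h1 | h1
  · refine ⟨√h, ⟨Real.sqrt_pos.2 h0, Real.sqrt_le_one.2 h1⟩, ?_⟩
    rw [Real.sq_sqrt h0.le]
    exact ⟨le_rfl, le_mul_of_one_le_left h0.le (by linarith)⟩
  · exact ⟨1, ⟨one_pos, le_rfl⟩, by simpa using h1, by linarith⟩

theorem HasBronshteinBound.exists_of_one_le_rootSqSum {n : ℕ} (ih₀ : HasBronshteinBound n)
    (ih₁ : HasBronshteinBound (n + 1)) (M : ℝ) :
    ∃ K : ℝ, ∀ c P, IsHyperbolicCurve (n + 2) M c P → 1 ≤ rootSqSum n (P 0) →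
      ∀ μ, (∀ k < μ, (P 0).coeff k = 0) → (P 0).coeff μ ≠ 0 → BronshteinBound μ K P := by
  obtain ⟨K₁, hK₁⟩ := ih₁.exists_of_truncation (N := n + 2) (by lia) M one_half_pos
  obtain ⟨K₀, hK₀⟩ := ih₀.exists_of_truncation (N := n + 2) (by lia) M
    (b := 1 / (4 * (|M| + 1))) (by positivity)
  refine ⟨max K₁ K₀, fun c P hP hone μ hzero hμ => ?_⟩
  have hlead := hP.abs_coeff_le le_rfl (t := 0) (by simp)
  rcases le_abs_coeff_of_one_le_rootSqSum (hlead.trans (le_abs_self M)) hone with h | h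
  · exact (hK₁ c P hP h μ hzero hμ).mono (le_max_left _ _)
  · exact (hK₀ c P hP h μ hzero hμ).mono (le_max_right _ _)

/- If `0` is the only root of `P 0`, all zooms stay bounded. Otherwise choose the zoom that makes
the sum of squares of the roots of `P 0` equal to `1`; then one of the coefficients of index `n + 1`
and `n` is bounded away from `0`, and truncating there lowers the degree. -/
theorem HasBronshteinBound.add_two {n : ℕ} (ih₀ : HasBronshteinBound n)
    (ih₁ : HasBronshteinBound (n + 1)) : HasBronshteinBound (n + 2) := by
  intro M c hc
  obtain ⟨M', hzoom⟩ := IsHyperbolicCurve.exists_zoom n M (1 + 3 * M ^ 2) hc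
  obtain ⟨K, hK⟩ := ih₀.exists_of_one_le_rootSqSum ih₁ M'
  refine ⟨max (M / c) K, fun P hP μ hzero hμ => ?_⟩
  have h0 : (0 : ℝ) ∈ Icc (-1 : ℝ) 1 := by simp
  have hdeg := hP.natDegree_eq hc h0
  have hμn : μ ≤ n + 2 := hdeg ▸ le_natDegree_of_ne_zero hμ
  rcases hμn.eq_or_lt with rfl | hlt
  · refine (hP.bronshteinBound_of_forall_zoom hc fun ρ hρ => hzoom P hP ρ hρ ?_).mono
      (le_max_left _ _)
    rw [rootSqSum, hzero _ (by lia), hzero n (by lia)]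
    have := sq_nonneg ρ
    norm_num
    positivity
  · have hpos : 0 < rootSqSum n (P 0) := by
      by_contra! hle
      exact hμ (coeff_eq_zero_of_rootSqSum_nonpos (hP.splits 0) hdeg hle hlt)
    obtain ⟨ρ, hρ, hρh, hκ⟩ :=
      exists_mem_Ioc_sq_le hpos (rootSqSum_le fun k hk => hP.abs_coeff_le hk h0)
    have hρ0 : ρ ≠ 0 := hρ.1.ne'
    have hQ := hzoom P hP ρ hρ hκ
    have hbound : BronshteinBound μ K fun t => zoom (n + 2) ρ (P (ρ * t)) := by
      refine hK c _ hQ ?_ μ (fun k hk => ?_) ?_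
      · rwa [rootSqSum_zoom n hρ0, mul_zero, one_le_div (pow_pos hρ.1 2)]
      · rw [coeff_zoom, mul_zero, hzero k hk, mul_zero]
      · rw [coeff_zoom, mul_zero]
        positivity
    exact (hbound.of_zoom (fun k hk => hP.contDiff_coeff_of_le hμn (hk.trans hμn)) hρ.1).mono
      (le_max_right _ _)

theorem hasBronshteinBound (n : ℕ) : HasBronshteinBound n := by
  induction n using Nat.twoStepInduction with
  | zero =>
    exact fun M c _ => ⟨1, fun P hP μ hzero hμ => by
      obtain rfl : μ = 0 := Nat.le_zero.1
        ((le_natDegree_of_ne_zero hμ).trans (hP.natDegree_le 0))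
      exact BronshteinBound.zero le_rfl⟩
  | one =>
    refine fun M c hc => ⟨max 1 (M / c), fun P hP μ hzero hμ => ?_⟩
    rcases Nat.le_one_iff_eq_zero_or_eq_one.1
      ((le_natDegree_of_ne_zero hμ).trans (hP.natDegree_le 0)) with rfl | rfl
    · exact BronshteinBound.zero (le_max_left _ _)
    · refine (hP.bronshteinBound_of_vanish hc fun k j hjk => ?_).mono (le_max_right _ _)
      obtain ⟨rfl, rfl⟩ : j = 0 ∧ k = 0 := by lia
      exact hzero 0 one_pos
  | more n ih₀ ih₁ => exact ih₀.add_two ih₁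

/-! ### Convergence of ordered roots -/

theorem exists_perm_comp_eq {ι α : Type*} [Fintype ι] {f g : ι → α}
    (h : Finset.univ.val.map f = Finset.univ.val.map g) : ∃ π : Equiv.Perm ι, g ∘ π = f := by
  classical
  have hfiber (c : α) : Nonempty ({i // f i = c} ≃ {i // g i = c}) := by
    have hcount := congrArg (Multiset.count c) h
    simp only [Multiset.count_map, ← Finset.filter_val, Finset.card_val] at hcount
    refine ⟨Fintype.equivOfCardEq ?_⟩
    simpa only [Fintype.card_subtype, eq_comm] using hcount
  exact ⟨Equiv.ofFiberEquiv fun c => (hfiber c).some,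
    funext fun i => Equiv.ofFiberEquiv_map (fun c => (hfiber c).some) i⟩

theorem coeff_taylor_eq_sum {R : Type*} [CommSemiring R] {p : R[X]} {n : ℕ} (hp : p.natDegree < n)
    (x : R) (k : ℕ) :
    (taylor x p).coeff k = ∑ m ∈ Finset.range n, (m.choose k * p.coeff m) * x ^ (m - k) := by
  rw [taylor_coeff, hasseDeriv_apply, sum_over_range' _ (fun _ => by simp) n hp, eval_finsetSum]
  simp only [eval_monomial]

/-- The monic polynomial with prescribed roots, indexed by a finite type. -/
noncomputable def rootPoly {ι R : Type*} [Fintype ι] [CommRing R] (v : ι → R) : R[X] :=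
  ∏ i, (X - C (v i))

section rootPoly

variable {ι R : Type*} [Fintype ι] [CommRing R]

theorem eval_rootPoly (v : ι → R) (w : R) : (rootPoly v).eval w = ∏ i, (w - v i) := by
  simp only [rootPoly, eval_prod, eval_sub, eval_X, eval_C]

theorem monic_rootPoly (v : ι → R) : (rootPoly v).Monic :=
  monic_prod_X_sub_C v Finset.univ

theorem natDegree_rootPoly [Nontrivial R] (v : ι → R) : (rootPoly v).natDegree = Fintype.card ι :=
  natDegree_finsetProd_X_sub_C_eq_card ..

theorem rootPoly_comp_perm (v : ι → R) (π : Equiv.Perm ι) :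
    (rootPoly fun i => v (π i)) = rootPoly v :=
  Equiv.prod_comp π fun i => X - C (v i)

theorem taylor_rootPoly (v : ι → R) (x : R) :
    taylor x (rootPoly v) = rootPoly fun i => v i - x := by
  simp only [rootPoly, taylor_apply, Polynomial.prod_comp, sub_comp, X_comp, C_comp, C_sub]
  exact Finset.prod_congr rfl fun i _ => by ring

theorem rootPoly_eq_mul (v : ι → R) (p : ι → Prop) [DecidablePred p] :
    rootPoly v = rootPoly (fun i : {i // p i} => v i) * rootPoly fun i : {i // ¬p i} => v i :=
  (Fintype.prod_subtype_mul_prod_subtype p fun i => X - C (v i)).symm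

theorem rootPoly_eq_X_pow_mul [DecidableEq R] (v : ι → R) :
    rootPoly v =
      X ^ Fintype.card {i // v i = 0} * rootPoly fun i : {i // ¬v i = 0} => v i := by
  rw [rootPoly_eq_mul v fun i => v i = 0]
  congr 1
  rw [rootPoly, ← Finset.card_univ, ← Finset.prod_const]
  exact Finset.prod_congr rfl fun i _ => by rw [i.2, C_0, sub_zero]

theorem splits_rootPoly {F : Type*} [Field F] (v : ι → F) : (rootPoly v).Splits :=
  Splits.prod fun i _ => Splits.X_sub_C (v i)

theorem exists_perm_comp_eq_of_rootPoly_eq [IsDomain R] {f g : ι → R}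
    (h : rootPoly f = rootPoly g) : ∃ π : Equiv.Perm ι, g ∘ π = f := by
  have hroots (v : ι → R) : (rootPoly v).roots = Finset.univ.val.map v := by
    rw [← roots_multiset_prod_X_sub_C (Finset.univ.val.map v), Multiset.map_map]
    rfl
  exact exists_perm_comp_eq (by rw [← hroots, ← hroots, h])

theorem coeff_rootPoly_sub [Nontrivial R] (v : ι → R) (x : R) (k : ℕ) :
    (rootPoly fun i => v i - x).coeff k =
      ∑ m ∈ Finset.range (Fintype.card ι + 1),
        (m.choose k * (rootPoly v).coeff m) * x ^ (m - k) := by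
  rw [← taylor_rootPoly]
  exact coeff_taylor_eq_sum ((natDegree_rootPoly v).trans_lt (Nat.lt_succ_self _)) x k

end rootPoly

theorem eq_of_monotone_of_comp_perm_eq {ι α : Type*} [Finite ι] [LinearOrder ι] [PartialOrder α]
    {f g : ι → α} (hf : Monotone f) (hg : Monotone g) {π : Equiv.Perm ι} (hπ : g ∘ π = f) :
    f = g := by
  have := Fintype.ofFinite ι
  let e := Fintype.orderIsoFinOfCardEq ι rfl
  have hsort := Tuple.unique_monotone (f := g ∘ e) (σ := (e.toEquiv.trans π).trans e.symm.toEquiv)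
    (τ := Equiv.refl _) ?_ (hg.comp e.monotone)
  · ext i
    simpa [← hπ] using congrFun hsort (e.symm i)
  · convert hf.comp e.monotone using 1
    ext i
    simp [← hπ]

section

variable {ι : Type*} [Fintype ι]

theorem exists_fin_forall_half_le_abs_sub (u : ι → ℝ) :
    ∃ j : Fin (Fintype.card ι + 1), ∀ i, 1 / 2 ≤ |(j : ℝ) - u i| := by
  by_contra! hnear
  choose f hf using hnear
  have hinj : Function.Injective f := fun j k hjk => by
    have hclose : |(j : ℝ) - k| < 1 := by
      have hk := hf k
      rw [← hjk, abs_sub_comm] at hk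
      linarith [abs_sub_le (j : ℝ) (u (f j)) k, hf j]
    have hint : |((j : ℕ) : ℤ) - (k : ℕ)| < 1 := by exact_mod_cast hclose
    rw [Int.abs_lt_one_iff, sub_eq_zero, Int.natCast_inj] at hint
    exact Fin.ext hint
  simpa using Fintype.card_le_of_injective f hinj

theorem two_mul_abs_sub_le_eval_rootPoly {u : ι → ℝ} {x : ℝ}
    (hx : ∀ i, 1 / 2 ≤ |x - u i|) (k : ι) :
    2 * |x - u k| ≤ 2 ^ Fintype.card ι * |(rootPoly u).eval x| := by
  classical
  have hone : 1 ≤ ∏ i ∈ Finset.univ.erase k, 2 * |x - u i| :=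
    Finset.one_le_prod fun i _ => by linarith [hx i]
  calc 2 * |x - u k| ≤ 2 * |x - u k| * ∏ i ∈ Finset.univ.erase k, 2 * |x - u i| :=
        le_mul_of_one_le_right (by positivity) hone
    _ = ∏ i, 2 * |x - u i| := Finset.mul_prod_erase _ (fun i => 2 * |x - u i|) (Finset.mem_univ k)
    _ = 2 ^ Fintype.card ι * |(rootPoly u).eval x| := by
        rw [eval_rootPoly, Finset.prod_mul_distrib, Finset.prod_const, Finset.card_univ,
          Finset.abs_prod]

variable {T : Type*} {l : Filter T} {u : T → ι → ℝ} {q : ℝ[X]}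

theorem exists_eventually_abs_le_of_tendsto_rootPoly
    (hq : ∀ w, Tendsto (fun t => (rootPoly (u t)).eval w) l (𝓝 (q.eval w))) :
    ∃ R, ∀ᶠ t in l, ∀ i, |u t i| ≤ R := by
  let d := Fintype.card ι
  let S := ∑ j : Fin (d + 1), (|q.eval (j : ℝ)| + 1)
  have hprod : ∀ᶠ t in l, ∀ j : Fin (d + 1), |(rootPoly (u t)).eval (j : ℝ)| ≤ S := by
    refine eventually_all.2 fun j => ?_
    filter_upwards [(hq j).abs.eventually (gt_mem_nhds (lt_add_one _))] with t ht
    exact ht.le.trans (Finset.single_le_sum (f := fun j : Fin (d + 1) => |q.eval (j : ℝ)| + 1)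
      (fun j _ => by positivity) (Finset.mem_univ j))
  refine ⟨d + 2 ^ d * S, ?_⟩
  filter_upwards [hprod] with t ht i
  obtain ⟨j, hfar⟩ := exists_fin_forall_half_le_abs_sub (u t)
  have hjd : (j : ℝ) ≤ d := mod_cast Fin.is_le j
  have hdist : 2 * |j - u t i| ≤ 2 ^ d * S :=
    (two_mul_abs_sub_le_eval_rootPoly hfar i).trans
      (mul_le_mul_of_nonneg_left (ht j) (by positivity))
  have htri := abs_sub_abs_le_abs_sub (u t i) j
  rw [abs_sub_comm, Nat.abs_cast] at htri
  linarith [abs_nonneg ((j : ℝ) - u t i)]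

theorem rootPoly_eq_of_clusterPt {v : ι → ℝ} (hv : ClusterPt v (map u l))
    (hq : ∀ w, Tendsto (fun t => (rootPoly (u t)).eval w) l (𝓝 (q.eval w))) : rootPoly v = q := by
  refine Polynomial.funext fun w => ?_
  have hcont : Continuous fun y : ι → ℝ => (rootPoly y).eval w := by
    simp only [eval_rootPoly]
    fun_prop
  have hcluster := hv.map hcont.continuousAt tendsto_map
  rw [Filter.map_map] at hcluster
  exact eq_of_nhds_neBot (hcluster.mono (hq w))

theorem exists_tendsto_of_monotone_of_tendsto_rootPoly [LinearOrder ι] [l.NeBot]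
    (hu : ∀ᶠ t in l, Monotone (u t))
    (hq : ∀ w, Tendsto (fun t => (rootPoly (u t)).eval w) l (𝓝 (q.eval w))) :
    ∃ v : ι → ℝ, Tendsto u l (𝓝 v) ∧ rootPoly v = q := by
  obtain ⟨R, hR⟩ := exists_eventually_abs_le_of_tendsto_rootPoly hq
  have hbox : IsCompact (univ.pi fun _ : ι => Icc (-R) R) :=
    isCompact_univ_pi fun _ => isCompact_Icc
  have hmem : ∀ᶠ y in map u l, y ∈ univ.pi fun _ : ι => Icc (-R) R := by
    rw [eventually_map]
    filter_upwards [hR] with t ht i _ using abs_le.1 (ht i)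
  have hmono (y : ι → ℝ) (hy : ClusterPt y (map u l)) : Monotone y := by
    have : ClusterPt y (𝓟 {f : ι → ℝ | Monotone f}) := hy.mono (le_principal_iff.2 hu)
    rwa [← mem_closure_iff_clusterPt, isClosed_monotone.closure_eq] at this
  obtain ⟨v, -, hv⟩ := hbox.exists_clusterPt (le_principal_iff.2 hmem)
  refine ⟨v, hbox.le_nhds_of_unique_clusterPt hmem fun y _ hy => ?_,
    rootPoly_eq_of_clusterPt hv hq⟩
  obtain ⟨π, hπ⟩ := exists_perm_comp_eq_of_rootPoly_eq
    ((rootPoly_eq_of_clusterPt hy hq).trans (rootPoly_eq_of_clusterPt hv hq).symm)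
  exact eq_of_monotone_of_comp_perm_eq (hmono y hy) (hmono v hv) hπ

theorem exists_tendsto_of_antitone_of_tendsto_rootPoly [LinearOrder ι] [l.NeBot]
    (hu : ∀ᶠ t in l, Antitone (u t))
    (hq : ∀ w, Tendsto (fun t => (rootPoly (u t)).eval w) l (𝓝 (q.eval w))) :
    ∃ v : ι → ℝ, Tendsto u l (𝓝 v) ∧ rootPoly v = q :=
  exists_tendsto_of_monotone_of_tendsto_rootPoly (ι := ιᵒᵈ) (hu.mono fun _ ht => ht.dual_left) hq

theorem continuous_of_monotone_of_continuous_rootPoly [TopologicalSpace T] [LinearOrder ι]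
    (hu : ∀ t, Monotone (u t)) (hcont : ∀ w, Continuous fun t => (rootPoly (u t)).eval w) :
    Continuous u := by
  refine continuous_iff_continuousAt.2 fun t₀ => ?_
  obtain ⟨v, hv, -⟩ := exists_tendsto_of_monotone_of_tendsto_rootPoly
    (Eventually.of_forall hu) fun w => (hcont w).tendsto t₀
  have : u t₀ = v := tendsto_nhds_unique (tendsto_pure_nhds u t₀) (hv.mono_left (pure_le_nhds t₀))
  rwa [ContinuousAt, this]

end

/-! ### Blowing up a root -/

theorem coeff_rootPoly_eq_zero_of_lt_card {ι R : Type*} [Fintype ι] [CommRing R] [DecidableEq R]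
    (v : ι → R) {k : ℕ} (hk : k < Fintype.card {i // v i = 0}) : (rootPoly v).coeff k = 0 := by
  rw [rootPoly_eq_X_pow_mul, coeff_X_pow_mul', if_neg hk.not_ge]

theorem coeff_rootPoly_card {ι R : Type*} [Fintype ι] [CommRing R] [DecidableEq R] (v : ι → R) :
    (rootPoly v).coeff (Fintype.card {i // v i = 0}) =
      (rootPoly fun i : {i // ¬v i = 0} => v i).eval 0 := by
  rw [rootPoly_eq_X_pow_mul, coeff_X_pow_mul', if_pos le_rfl, Nat.sub_self, coeff_zero_eq_eval_zero]

theorem coeff_rootPoly_card_ne_zero {ι R : Type*} [Fintype ι] [CommRing R] [IsDomain R]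
    [DecidableEq R] (v : ι → R) : (rootPoly v).coeff (Fintype.card {i // v i = 0}) ≠ 0 := by
  rw [coeff_rootPoly_card, eval_rootPoly]
  exact Finset.prod_ne_zero_iff.2 fun i _ => by simpa using i.2

/-- The blow-up of a curve of polynomials at a root of multiplicity `μ` at the origin: the limit of
`zoom μ t (P t)` as `t → 0`, provided that the `k`-th coefficient of `P t` is `O(t ^ (μ - k))`. -/
noncomputable def initialForm (μ : ℕ) (P : ℝ → ℝ[X]) : ℝ[X] :=
  ∑ k ∈ Finset.range (μ + 1),
    C (iteratedDeriv (μ - k) (fun t => (P t).coeff k) 0 / (μ - k).factorial) * X ^ k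

section initialForm

variable {μ n : ℕ} {K : ℝ} {P : ℝ → ℝ[X]}

theorem coeff_initialForm {k : ℕ} (hk : k ≤ μ) : (initialForm μ P).coeff k =
    iteratedDeriv (μ - k) (fun t => (P t).coeff k) 0 / (μ - k).factorial := by
  simp only [initialForm, finsetSum_coeff, coeff_C_mul_X_pow]
  rw [Finset.sum_ite_eq, if_pos (Finset.mem_range_succ_iff.2 hk)]

theorem coeff_initialForm_of_lt {k : ℕ} (hk : μ < k) : (initialForm μ P).coeff k = 0 := by
  simp only [initialForm, finsetSum_coeff, coeff_C_mul_X_pow]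
  rw [Finset.sum_ite_eq, if_neg (by simpa using hk)]

theorem coeff_initialForm_self : (initialForm μ P).coeff μ = (P 0).coeff μ := by
  simp [coeff_initialForm le_rfl]

theorem natDegree_initialForm_le : (initialForm μ P).natDegree ≤ μ :=
  natDegree_le_iff_coeff_eq_zero.2 fun _ hk => coeff_initialForm_of_lt hk

theorem BronshteinBound.tendsto_coeff_zoom (h : BronshteinBound μ K P)
    (hP : ∀ k, ContDiff ℝ μ fun t => (P t).coeff k) (k : ℕ) :
    Tendsto (fun t => (zoom μ t (P t)).coeff k) (𝓝[≠] 0) (𝓝 ((initialForm μ P).coeff k)) := by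
  rcases le_or_gt k μ with hk | hk
  · have hpeano := tendsto_div_pow_of_iteratedDeriv_eq_zero
      ((hP k).of_le (by exact_mod_cast Nat.sub_le μ k)) fun j hj => (h k hk).1 j (by lia)
    rw [coeff_initialForm hk]
    refine hpeano.congr' ?_
    filter_upwards [self_mem_nhdsWithin] with t (ht : t ≠ 0)
    rw [coeff_zoom, sub_zero, ← Nat.sub_add_cancel hk, pow_add, Nat.sub_add_cancel hk]
    field_simp
  · have hcont : Continuous fun t => t ^ (k - μ) * (P t).coeff k :=
      (continuous_pow _).mul (hP k).continuous
    have hlim := (hcont.tendsto 0).mono_left (nhdsWithin_le_nhds (s := {0}ᶜ))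
    rw [zero_pow (by lia), zero_mul] at hlim
    rw [coeff_initialForm_of_lt hk]
    refine hlim.congr' ?_
    filter_upwards [self_mem_nhdsWithin] with t (ht : t ≠ 0)
    rw [coeff_zoom, pow_sub₀ _ ht hk.le, mul_comm (t ^ k)]

theorem BronshteinBound.tendsto_eval_zoom (h : BronshteinBound μ K P)
    (hP : ∀ k, ContDiff ℝ μ fun t => (P t).coeff k) (hdeg : ∀ t, (P t).natDegree ≤ n) (hμ : μ ≤ n)
    (w : ℝ) :
    Tendsto (fun t => (zoom μ t (P t)).eval w) (𝓝[≠] 0) (𝓝 ((initialForm μ P).eval w)) := by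
  rw [eval_eq_sum_range' (Nat.lt_succ_of_le (natDegree_initialForm_le.trans hμ))]
  refine Tendsto.congr (fun t => (eval_eq_sum_range' (Nat.lt_succ_of_le
    ((natDegree_zoom_le μ t (P t)).trans (hdeg t))) w).symm) ?_
  exact tendsto_finsetSum _ fun k _ => (h.tendsto_coeff_zoom hP k).mul_const _

theorem BronshteinBound.abs_lt_of_isRoot_initialForm (h : BronshteinBound μ K P)
    (hμ : (P 0).coeff μ ≠ 0) {z : ℝ} (hz : (initialForm μ P).IsRoot z) : |z| < K + 1 := by
  have hK : 0 ≤ K := nonneg_of_mul_nonneg_left ((abs_nonneg _).trans (h μ le_rfl).2) (abs_pos.2 hμ)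
  have hlead : (initialForm μ P).leadingCoeff = (P 0).coeff μ := by
    rw [leadingCoeff, natDegree_eq_of_le_of_coeff_ne_zero natDegree_initialForm_le
      (coeff_initialForm_self.trans_ne hμ), coeff_initialForm_self]
  refine abs_lt_of_isRoot_of_abs_coeff_le (leadingCoeff_ne_zero.1 (hlead.trans_ne hμ))
    (fun k => ?_) hz
  rw [hlead]
  rcases le_or_gt k μ with hk | hk
  · rw [coeff_initialForm hk, abs_div, Nat.abs_cast]
    exact (div_le_self (abs_nonneg _) (by exact_mod_cast (μ - k).factorial_pos)).trans (h k hk).2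
  · rw [coeff_initialForm_of_lt hk, abs_zero]
    positivity

end initialForm

/-- The one-sided derivatives of the curves `L · i` at `t`: the right ones are given by `d`, and
the left ones are a rearrangement of them by a permutation `π` preserving the values `L t`. -/
structure HasPermutedDerivsAt {ι E : Type*} [NormedAddCommGroup E] [NormedSpace ℝ E]
    (L : ℝ → ι → E) (π : Equiv.Perm ι) (d : ι → E) (t : ℝ) : Prop where
  apply_perm : ∀ i, L t (π i) = L t i
  right : ∀ i, HasDerivWithinAt (fun s => L s i) (d i) (Ioi t) t
  left : ∀ i, HasDerivWithinAt (fun s => L s i) (d (π i)) (Iio t) t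

theorem hasDerivWithinAt_of_comp_const_add_sub {f : ℝ → ℝ} {f' t₀ x₀ : ℝ} {s : Set ℝ}
    (h : HasDerivWithinAt (fun t => f (t₀ + t) - x₀) f' ((t₀ + ·) ⁻¹' s) 0) :
    HasDerivWithinAt f f' s t₀ := by
  have hsub : HasDerivWithinAt (fun t => t - t₀) 1 s t₀ :=
    ((hasDerivAt_id t₀).sub_const t₀).hasDerivWithinAt
  have hmaps : MapsTo (fun t => t - t₀) s ((t₀ + ·) ⁻¹' s) := fun t ht => by
    simpa only [mem_preimage, add_sub_cancel] using ht
  rw [← sub_self t₀] at h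
  simpa [Function.comp_def] using
    (HasDerivWithinAt.comp (h := fun t => t - t₀) t₀ h hsub hmaps).add_const x₀

theorem exists_hasPermutedDerivsAt_of_fiber {ι : Type*} {L : ℝ → ι → ℝ} {t B : ℝ}
    (h : ∀ x, ∃ (π : Equiv.Perm {i // L t i = x}) (v : {i // L t i = x} → ℝ),
      ∀ i : {i // L t i = x}, HasDerivWithinAt (fun s => L s i) (v i) (Ioi t) t ∧
        HasDerivWithinAt (fun s => L s i) (v (π i)) (Iio t) t ∧ |v i| ≤ B) :
    ∃ π d, HasPermutedDerivsAt L π d t ∧ ∀ i, |d i| ≤ B := by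
  choose π v hv using h
  let d (i : ι) : ℝ := v (L t i) ⟨i, rfl⟩
  have hd (x : ℝ) (j : {i // L t i = x}) : d j = v x j := by
    obtain ⟨i, rfl⟩ := j
    rfl
  refine ⟨Equiv.ofFiberEquiv π, d, ⟨Equiv.ofFiberEquiv_map π, fun i => (hv _ ⟨i, rfl⟩).1,
    fun i => ?_⟩, fun i => (hv _ ⟨i, rfl⟩).2.2⟩
  have hperm : d (Equiv.ofFiberEquiv π i) = v (L t i) (π _ ⟨i, rfl⟩) := hd _ (π _ ⟨i, rfl⟩)
  rw [hperm]
  exact (hv _ ⟨i, rfl⟩).2.1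

/-- A curve of increasingly ordered tuples that are the roots, with multiplicity, of a curve of
monic polynomials of degree `n` with `Cⁿ` coefficients, where `n` is the cardinality of `ι`. -/
structure IsOrderedRootCurve {ι : Type*} [Fintype ι] [LinearOrder ι] (L : ℝ → ι → ℝ) : Prop where
  monotone : ∀ t, Monotone (L t)
  contDiff_coeff : ∀ k, ContDiff ℝ (Fintype.card ι) fun t => (rootPoly (L t)).coeff k

theorem rootPoly_comp_div_mul {ι : Type*} [Fintype ι] (v : ι → ℝ) {t : ℝ} (ht : t ≠ 0) (w : ℝ) :
    (rootPoly fun i => v i / t).eval w * t ^ Fintype.card ι = (rootPoly v).eval (t * w) := by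
  rw [eval_rootPoly, eval_rootPoly, ← Finset.card_univ, ← Finset.prod_const,
    ← Finset.prod_mul_distrib]
  exact Finset.prod_congr rfl fun i _ => by field_simp

namespace IsOrderedRootCurve

variable {ι : Type*} [Fintype ι] [LinearOrder ι] {L : ℝ → ι → ℝ}

theorem continuous (hL : IsOrderedRootCurve L) : Continuous L := by
  refine continuous_of_monotone_of_continuous_rootPoly hL.monotone fun w => ?_
  simp only [eval_eq_sum_range' ((natDegree_rootPoly _).trans_lt (Nat.lt_succ_self _))]
  exact continuous_finsetSum _ fun k _ => (hL.contDiff_coeff k).continuous.mul_const _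

theorem tendsto_eval_rootPoly_div (hL : IsOrderedRootCurve L) {K : ℝ} {μ : ℕ}
    (hμ : Fintype.card {i // L 0 i = 0} = μ) (hK : BronshteinBound μ K fun t => rootPoly (L t))
    (w : ℝ) :
    Tendsto (fun t => (rootPoly fun i : {i // L 0 i = 0} => L t i / t).eval w) (𝓝[≠] 0)
      (𝓝 ((C ((rootPoly (L 0)).coeff μ)⁻¹ * initialForm μ fun t => rootPoly (L t)).eval w)) := by
  have hμn : μ ≤ Fintype.card ι := hμ ▸ Fintype.card_subtype_le _
  have hne : (rootPoly (L 0)).coeff μ ≠ 0 := hμ ▸ coeff_rootPoly_card_ne_zero (L 0)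
  have hzoom := hK.tendsto_eval_zoom
    (fun k => (hL.contDiff_coeff k).of_le (by exact_mod_cast hμn))
    (fun t => (natDegree_rootPoly (L t)).le) hμn w
  have hrest : Tendsto (fun t => (rootPoly fun i : {i // ¬L 0 i = 0} => L t i).eval (t * w))
      (𝓝[≠] 0) (𝓝 ((rootPoly (L 0)).coeff μ)) := by
    have hcont := hL.continuous
    have : Continuous fun t => (rootPoly fun i : {i // ¬L 0 i = 0} => L t i).eval (t * w) := by
      simp only [eval_rootPoly]
      fun_prop
    rw [← hμ, coeff_rootPoly_card]
    simpa only [zero_mul] using (this.tendsto 0).mono_left nhdsWithin_le_nhds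
  rw [eval_mul, eval_C, inv_mul_eq_div]
  refine (hzoom.div hrest hne).congr' ?_
  filter_upwards [self_mem_nhdsWithin, hrest.eventually_ne hne] with t (ht : t ≠ 0) ht_rest
  rw [Pi.div_apply, div_eq_iff ht_rest, zoom, eval_mul, eval_C, eval_comp, eval_mul, eval_C, eval_X,
    rootPoly_eq_mul (L t) fun i => L 0 i = 0, eval_mul,
    ← rootPoly_comp_div_mul (fun i : {i // L 0 i = 0} => L t i) ht, hμ]
  field_simp

theorem exists_hasDerivWithinAt_zero (hL : IsOrderedRootCurve L) {K : ℝ}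
    (hK : BronshteinBound (Fintype.card {i // L 0 i = 0}) K fun t => rootPoly (L t)) :
    ∃ (π : Equiv.Perm {i // L 0 i = 0}) (v : {i // L 0 i = 0} → ℝ), ∀ i : {i // L 0 i = 0},
      HasDerivWithinAt (fun t => L t i) (v i) (Ioi 0) 0 ∧
      HasDerivWithinAt (fun t => L t i) (v (π i)) (Iio 0) 0 ∧ |v i| < K + 1 := by
  have hlim := hL.tendsto_eval_rootPoly_div rfl hK
  have hne := coeff_rootPoly_card_ne_zero (L 0)
  obtain ⟨v, hv, hvq⟩ := exists_tendsto_of_monotone_of_tendsto_rootPoly (l := 𝓝[>] 0)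
    (by filter_upwards [self_mem_nhdsWithin] with t (ht : 0 < t) i j hij
        exact div_le_div_of_nonneg_right (hL.monotone t hij) ht.le)
    fun w => (hlim w).mono_left (nhdsGT_le_nhdsNE 0)
  obtain ⟨v', hv', hvq'⟩ := exists_tendsto_of_antitone_of_tendsto_rootPoly (l := 𝓝[<] 0)
    (by filter_upwards [self_mem_nhdsWithin] with t (ht : t < 0) i j hij
        exact div_le_div_of_nonpos_of_le ht.le (hL.monotone t hij))
    fun w => (hlim w).mono_left (nhdsLT_le_nhdsNE 0)
  obtain ⟨π, hπ⟩ := exists_perm_comp_eq_of_rootPoly_eq (hvq'.trans hvq.symm)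
  have hslope (i : {i // L 0 i = 0}) (t : ℝ) : slope (fun t => L t i) 0 t = L t i / t := by
    rw [slope_def_field, i.2, sub_zero, sub_zero]
  refine ⟨π, v, fun i => ⟨?_, ?_, ?_⟩⟩
  · rw [hasDerivWithinAt_iff_tendsto_slope' self_notMem_Ioi]
    exact (tendsto_pi_nhds.1 hv i).congr fun t => (hslope i t).symm
  · rw [hasDerivWithinAt_iff_tendsto_slope' self_notMem_Iio, ← Function.comp_apply (f := v), hπ]
    exact (tendsto_pi_nhds.1 hv' i).congr fun t => (hslope i t).symm
  · refine hK.abs_lt_of_isRoot_initialForm hne ?_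
    have hroot : (rootPoly v).eval (v i) = 0 := by
      rw [eval_rootPoly]
      exact Finset.prod_eq_zero (Finset.mem_univ i) (sub_self _)
    rw [hvq, eval_mul, eval_C] at hroot
    exact (mul_eq_zero.1 hroot).resolve_left (inv_ne_zero hne)

theorem translate (hL : IsOrderedRootCurve L) (t₀ x₀ : ℝ) :
    IsOrderedRootCurve fun t i => L (t₀ + t) i - x₀ where
  monotone t _ _ hij := sub_le_sub_right (hL.monotone (t₀ + t) hij) x₀
  contDiff_coeff k := by
    simp only [coeff_rootPoly_sub]
    exact ContDiff.sum fun m _ => (contDiff_const.mul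
      ((hL.contDiff_coeff m).comp (contDiff_const.add contDiff_id))).mul contDiff_const

theorem continuous_iteratedDeriv_coeff_translate (hL : IsOrderedRootCurve L) {j : ℕ}
    (hj : j ≤ Fintype.card ι) (k : ℕ) :
    Continuous fun z : (ℝ × ℝ) × ℝ =>
      iteratedDeriv j (fun t => (rootPoly fun i => L (z.1.1 + t) i - z.1.2).coeff k) z.2 := by
  have hsmooth (m : ℕ) : ContDiff ℝ j fun t => (rootPoly (L t)).coeff m :=
    (hL.contDiff_coeff m).of_le (by exact_mod_cast hj)
  have hformula (z : (ℝ × ℝ) × ℝ) :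
      iteratedDeriv j (fun t => (rootPoly fun i => L (z.1.1 + t) i - z.1.2).coeff k) z.2 =
        ∑ m ∈ Finset.range (Fintype.card ι + 1), (m.choose k *
          iteratedDeriv j (fun t => (rootPoly (L t)).coeff m) (z.1.1 + z.2)) *
            z.1.2 ^ (m - k) := by
    simp only [coeff_rootPoly_sub]
    rw [iteratedDeriv_fun_sum]
    swap
    · exact fun m _ => ((contDiff_const.mul
        ((hsmooth m).comp (contDiff_const.add contDiff_id))).mul contDiff_const).contDiffAt
    refine Finset.sum_congr rfl fun m _ => ?_
    rw [iteratedDeriv_mul_const_field, iteratedDeriv_const_mul_field,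
      iteratedDeriv_comp_const_add (f := fun t => (rootPoly (L t)).coeff m)]
  simp only [hformula]
  refine continuous_finsetSum _ fun m _ => Continuous.mul (continuous_const.mul
    (((hsmooth m).continuous_iteratedDeriv' j).comp ?_)) ?_
  · fun_prop
  · fun_prop

theorem exists_forall_isHyperbolicCurve_translate (hL : IsOrderedRootCurve L) (R : ℝ) :
    ∃ M, ∀ t₀ ∈ Icc (-R) R, ∀ x₀ ∈ Icc (-R) R,
      IsHyperbolicCurve (Fintype.card ι) M 1 fun t => rootPoly fun i => L (t₀ + t) i - x₀ := by
  let F (z : (ℝ × ℝ) × ℝ) (k j : Fin (Fintype.card ι + 1)) : ℝ :=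
    iteratedDeriv j (fun t => (rootPoly fun i => L (z.1.1 + t) i - z.1.2).coeff k) z.2
  have hF : Continuous F := continuous_pi fun k => continuous_pi fun j =>
    hL.continuous_iteratedDeriv_coeff_translate (Nat.lt_succ_iff.1 j.2) k
  obtain ⟨M, hM⟩ := ((isCompact_Icc.prod isCompact_Icc).prod
    isCompact_Icc).exists_bound_of_continuousOn
      (s := (Icc (-R) R ×ˢ Icc (-R) R) ×ˢ Icc (-1 : ℝ) 1) hF.continuousOn
  refine ⟨M, fun t₀ ht₀ x₀ hx₀ => ?_⟩
  refine
    { natDegree_le := fun t => (natDegree_rootPoly _).le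
      splits := fun t => splits_rootPoly _
      contDiff_coeff := fun k _ => (hL.translate t₀ x₀).contDiff_coeff k
      abs_iteratedDeriv_coeff_le := fun k hk j hj t ht => ?_
      le_abs_coeff := fun t _ => ?_ }
  · calc |F ((t₀, x₀), t) ⟨k, Nat.lt_succ_of_le hk⟩ ⟨j, Nat.lt_succ_of_le hj⟩|
        ≤ ‖F ((t₀, x₀), t)‖ := (norm_le_pi_norm (F ((t₀, x₀), t) _) _).trans (norm_le_pi_norm _ _)
      _ ≤ M := hM _ ⟨⟨ht₀, hx₀⟩, ht⟩
  · rw [← natDegree_rootPoly fun i => L (t₀ + t) i - x₀, (monic_rootPoly _).coeff_natDegree,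
      abs_one]

theorem exists_hasDerivWithinAt_fiber (hL : IsOrderedRootCurve L) {t₀ x₀ K : ℝ}
    (hK : ∀ μ, (∀ k < μ, (rootPoly fun i => L (t₀ + 0) i - x₀).coeff k = 0) →
      (rootPoly fun i => L (t₀ + 0) i - x₀).coeff μ ≠ 0 →
        BronshteinBound μ K fun t => rootPoly fun i => L (t₀ + t) i - x₀) :
    ∃ (π : Equiv.Perm {i // L t₀ i = x₀}) (v : {i // L t₀ i = x₀} → ℝ), ∀ i : {i // L t₀ i = x₀},
      HasDerivWithinAt (fun t => L t i) (v i) (Ioi t₀) t₀ ∧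
      HasDerivWithinAt (fun t => L t i) (v (π i)) (Iio t₀) t₀ ∧ |v i| < K + 1 := by
  obtain ⟨π, v, hv⟩ := (hL.translate t₀ x₀).exists_hasDerivWithinAt_zero <|
    hK _ (fun _ => coeff_rootPoly_eq_zero_of_lt_card _) (coeff_rootPoly_card_ne_zero _)
  let e : {i // L t₀ i = x₀} ≃ {i // L (t₀ + 0) i - x₀ = 0} :=
    Equiv.subtypeEquivRight fun i => by rw [add_zero, sub_eq_zero]
  refine ⟨(e.trans π).trans e.symm, v ∘ e, fun i => ?_⟩
  obtain ⟨hright, hleft, hbound⟩ := hv (e i)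
  refine ⟨hasDerivWithinAt_of_comp_const_add_sub (x₀ := x₀) ?_,
    hasDerivWithinAt_of_comp_const_add_sub (x₀ := x₀) ?_, hbound⟩
  · rw [preimage_const_add_Ioi, sub_self]
    exact hright
  · rw [preimage_const_add_Iio, sub_self]
    rw [Function.comp_apply, Equiv.trans_apply, Equiv.apply_symm_apply]
    exact hleft

theorem exists_hasPermutedDerivsAt (hL : IsOrderedRootCurve L) (R : ℝ) :
    ∃ B, ∀ t ∈ Icc (-R) R, ∃ π d, HasPermutedDerivsAt L π d t ∧ ∀ i, |d i| ≤ B := by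
  obtain ⟨S, hS⟩ := isCompact_Icc.exists_bound_of_continuousOn (s := Icc (-R) R)
    hL.continuous.continuousOn
  obtain ⟨M, hM⟩ := hL.exists_forall_isHyperbolicCurve_translate (max R S)
  obtain ⟨K, hK⟩ := hasBronshteinBound (Fintype.card ι) M 1 one_pos
  refine ⟨K + 1, fun t ht => exists_hasPermutedDerivsAt_of_fiber fun x => ?_⟩
  by_cases hx : ∃ i, L t i = x
  · have ht' : t ∈ Icc (-max R S) (max R S) :=
      Icc_subset_Icc (neg_le_neg (le_max_left R S)) (le_max_left R S) ht
    have hx' : x ∈ Icc (-max R S) (max R S) := by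
      obtain ⟨i, rfl⟩ := hx
      exact abs_le.1 (((norm_le_pi_norm (L t) i).trans (hS t ht)).trans (le_max_right R S))
    obtain ⟨π, v, hv⟩ := hL.exists_hasDerivWithinAt_fiber (hK _ (hM t ht' x hx'))
    exact ⟨π, v, fun i => ⟨(hv i).1, (hv i).2.1, (hv i).2.2.le⟩⟩
  · exact ⟨1, 0, fun i => (hx ⟨i, i.2⟩).elim⟩

end IsOrderedRootCurve

/-! ### Differentiable rearrangements -/

/-- The map `σ` jumps by `π t` on the left just after each `t ∈ S`, and changes up to any
later time only by further factors generated by the intermediate values of `π`. It replaces the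
ordered product of the jumps before time `t`, which has infinitely many factors. -/
def HasJumpsOn {T G : Type*} [LinearOrder T] [Group G] (π σ : T → G) (S : Set T) : Prop :=
  ∀ t₁ ∈ S, ∀ t₂, t₁ < t₂ → ∃ h ∈ Subgroup.closure (π '' Ioo t₁ t₂), σ t₂ = h * π t₁ * σ t₁

theorem exists_hasJumpsOn_finset {T G : Type*} [LinearOrder T] [Group G] (π : T → G)
    (F : Finset T) : ∃ σ, HasJumpsOn π σ F := by
  induction F using Finset.induction_on_max with
  | empty => exact ⟨1, fun t ht => absurd ht (Finset.notMem_empty t)⟩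
  | insert a F ha ih =>
    obtain ⟨σ, hσ⟩ := ih
    refine ⟨fun t => if t ≤ a then σ t else π a * σ a, fun t₁ ht₁ t₂ hlt => ?_⟩
    rcases Finset.mem_insert.1 ht₁ with rfl | ht₁
    · exact ⟨1, one_mem _, by simp [hlt]⟩
    simp only [if_pos (ha t₁ ht₁).le]
    rcases le_or_gt t₂ a with hle | hgt
    · simpa only [if_pos hle] using hσ t₁ ht₁ t₂ hlt
    · obtain ⟨h, hh, heq⟩ := hσ t₁ ht₁ a (ha t₁ ht₁)
      have hmem : π a ∈ π '' Ioo t₁ t₂ := mem_image_of_mem π ⟨ha t₁ ht₁, hgt⟩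
      have hmono : Subgroup.closure (π '' Ioo t₁ a) ≤ Subgroup.closure (π '' Ioo t₁ t₂) :=
        Subgroup.closure_mono (image_mono (Ioo_subset_Ioo_right hgt.le))
      refine ⟨π a * h, mul_mem (Subgroup.subset_closure hmem) (hmono hh), ?_⟩
      rw [if_neg hgt.not_ge, heq]
      simp only [mul_assoc]

theorem exists_hasJumpsOn_univ {T G : Type*} [LinearOrder T] [Group G] [Finite G] (π : T → G) :
    ∃ σ, HasJumpsOn π σ univ := by
  classical
  choose s hs using exists_hasJumpsOn_finset π
  -- `s F` converges pointwise along any ultrafilter finer than `atTop`, as `G` is finite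
  let U : Ultrafilter (Finset T) := Ultrafilter.of atTop
  have hlim (t : T) : ∃ g, ∀ᶠ F in (U : Filter (Finset T)), s F t = g :=
    Ultrafilter.eventually_exists_iff.1 (Eventually.of_forall fun F => ⟨s F t, rfl⟩)
  choose σ hσ using hlim
  refine ⟨σ, fun t₁ _ t₂ hlt => ?_⟩
  have hmem : ∀ᶠ F in (U : Filter (Finset T)), t₁ ∈ F :=
    Ultrafilter.of_le _ ((eventually_ge_atTop {t₁}).mono fun F => Finset.singleton_subset_iff.1)
  obtain ⟨F, ⟨h₁, h₂⟩, hF⟩ := (((hσ t₁).and (hσ t₂)).and hmem).exists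
  simpa only [h₁, h₂] using hs F t₁ hF t₂ hlt

theorem comp_perm_eq_of_mem_closure {ι κ : Type*} {c : ι → κ} {S : Set (Equiv.Perm ι)}
    (hS : ∀ g ∈ S, c ∘ g = c) {g : Equiv.Perm ι} (hg : g ∈ Subgroup.closure S) : c ∘ g = c := by
  induction hg using Subgroup.closure_induction with
  | mem g hg => exact hS g hg
  | one => rfl
  | mul g h _ _ ihg ihh => rw [Equiv.Perm.coe_mul, ← Function.comp_assoc, ihg, ihh]
  | inv g _ ih =>
    calc c ∘ ⇑g⁻¹ = (c ∘ g) ∘ ⇑g⁻¹ := by rw [ih]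
      _ = c := by rw [Function.comp_assoc, ← Equiv.Perm.coe_mul, mul_inv_cancel]; rfl

theorem HasJumpsOn.comp_eq {T ι κ : Type*} [LinearOrder T] {π σ : T → Equiv.Perm ι} {S : Set T}
    (hσ : HasJumpsOn π σ S) {t₁ t₂ : T} (ht₁ : t₁ ∈ S) (hlt : t₁ < t₂) {c : ι → κ}
    (hc : ∀ s ∈ Ioo t₁ t₂, c ∘ π s = c) : c ∘ σ t₂ = c ∘ π t₁ ∘ σ t₁ := by
  obtain ⟨h, hh, heq⟩ := hσ t₁ ht₁ t₂ hlt
  rw [heq, Equiv.Perm.coe_mul, Equiv.Perm.coe_mul, ← Function.comp_assoc, ← Function.comp_assoc,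
    comp_perm_eq_of_mem_closure (forall_mem_image.2 hc) hh, Function.comp_assoc]

section

variable {ι E : Type*} [Finite ι] [NormedAddCommGroup E] [NormedSpace ℝ E]

section

variable {L : ℝ → ι → E} {d : ι → E} {s : Set ℝ} {t : ℝ}

theorem eventually_eq_imp_eq_of_hasDerivWithinAt (ht : t ∉ s)
    (h : ∀ i, HasDerivWithinAt (fun u => L u i) (d i) s t) :
    ∀ᶠ u in 𝓝[s] t, ∀ i j, L u i = L u j → (L t i, d i) = (L t j, d j) := by
  refine eventually_all.2 fun i => eventually_all.2 fun j => ?_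
  by_cases hval : L t i = L t j
  · by_cases hd : d i = d j
    · exact Eventually.of_forall fun _ _ => Prod.ext hval hd
    · have hne := ((h i).sub (h j)).eventually_ne (c := 0) (sub_ne_zero.2 hd)
      rw [sdiff_singleton_eq_self ht] at hne
      exact hne.mono fun u hu heq => (hu (sub_eq_zero.2 heq)).elim
  · have hne := ((h i).continuousWithinAt.sub (h j).continuousWithinAt).eventually_ne
      (sub_ne_zero.2 hval)
    exact hne.mono fun u hu heq => (hu (sub_eq_zero.2 heq)).elim

theorem hasDerivWithinAt_apply_of_eventually_eq {k : ℝ → ι} {d' : E}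
    (h : ∀ i, HasDerivWithinAt (fun u => L u i) (d i) s t)
    (hk : ∀ᶠ u in 𝓝[s] t, (L t (k u), d (k u)) = (L t (k t), d')) :
    HasDerivWithinAt (fun u => L u (k u)) d' s t := by
  simp only [hasDerivWithinAt_iff_isLittleO, Asymptotics.isLittleO_iff] at h ⊢
  intro ε hε
  filter_upwards [hk, eventually_all.2 fun i => h i hε] with u hu hbound
  obtain ⟨hval, hd⟩ := Prod.mk_inj.1 hu
  simpa only [hval, hd] using hbound (k u)

end

theorem hasDerivAt_apply_of_hasPermutedDerivsAt {L : ℝ → ι → E} {π σ : ℝ → Equiv.Perm ι}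
    {d : ℝ → ι → E} (hL : ∀ t, HasPermutedDerivsAt L (π t) (d t) t)
    (hσ : HasJumpsOn π σ univ) (j : ι) (t : ℝ) :
    HasDerivAt (fun s => L s (σ s j)) (d t (π t (σ t j))) t := by
  have hright : HasDerivWithinAt (fun s => L s (σ s j)) (d t (π t (σ t j))) (Ioi t) t := by
    refine hasDerivWithinAt_apply_of_eventually_eq (hL t).right ?_
    have hsep := eventually_eq_imp_eq_of_hasDerivWithinAt self_notMem_Ioi (hL t).right
    obtain ⟨δ, hδ, hsep⟩ := mem_nhdsGT_iff_exists_Ioo_subset.1 hsep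
    filter_upwards [Ioo_mem_nhdsGT hδ] with u hu
    have hcolour := hσ.comp_eq (c := fun i => (L t i, d t i)) (mem_univ t) hu.1 fun s hs =>
      funext fun i => hsep ⟨hs.1, hs.2.trans hu.2⟩ _ _ ((hL s).apply_perm i)
    simpa only [Function.comp_apply, (hL t).apply_perm] using congrFun hcolour j
  have hleft : HasDerivWithinAt (fun s => L s (σ s j)) (d t (π t (σ t j))) (Iio t) t := by
    refine hasDerivWithinAt_apply_of_eventually_eq (hL t).left ?_
    have hsep := eventually_eq_imp_eq_of_hasDerivWithinAt self_notMem_Iio (hL t).left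
    obtain ⟨δ, hδ, hsep⟩ := mem_nhdsLT_iff_exists_Ioo_subset.1 hsep
    filter_upwards [Ioo_mem_nhdsLT hδ] with u hu
    have hpres (s : ℝ) (hs : s ∈ Ico u t) (i : ι) :=
      hsep ⟨hu.1.trans_le hs.1, hs.2⟩ _ _ ((hL s).apply_perm i)
    have hcolour := hσ.comp_eq (c := fun i => (L t i, d t (π t i))) (mem_univ u) hu.2 fun s hs =>
      funext (hpres s ⟨hs.1.le, hs.2⟩)
    exact ((congrFun hcolour j).trans (hpres u ⟨le_rfl, hu.2⟩ (σ u j))).symm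
  have hunion := hleft.union hright
  rwa [Iio_union_Ioi, compl_eq_univ_sdiff, hasDerivWithinAt_sdiff_singleton,
    hasDerivWithinAt_univ] at hunion

end

theorem IsOrderedRootCurve.exists_perm_differentiable {ι : Type*} [Fintype ι] [LinearOrder ι]
    {L : ℝ → ι → ℝ} (hL : IsOrderedRootCurve L) :
    ∃ σ : ℝ → Equiv.Perm ι, (∀ j, Differentiable ℝ fun t => L t (σ t j)) ∧
      ∀ K : Set ℝ, IsCompact K → ∃ B, ∀ j, ∀ t ∈ K, |deriv (fun s => L s (σ s j)) t| ≤ B := by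
  have hderiv (t : ℝ) : ∃ π d, HasPermutedDerivsAt L π d t := by
    obtain ⟨B, hB⟩ := hL.exists_hasPermutedDerivsAt |t|
    obtain ⟨π, d, hd, -⟩ := hB t ⟨neg_abs_le t, le_abs_self t⟩
    exact ⟨π, d, hd⟩
  choose π d hd using hderiv
  obtain ⟨σ, hσ⟩ := exists_hasJumpsOn_univ π
  have hdiff := hasDerivAt_apply_of_hasPermutedDerivsAt hd hσ
  refine ⟨σ, fun j t => (hdiff j t).differentiableAt, fun K hK => ?_⟩
  obtain ⟨R, hR⟩ := hK.isBounded.exists_norm_le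
  obtain ⟨B, hB⟩ := hL.exists_hasPermutedDerivsAt R
  refine ⟨B, fun j t ht => ?_⟩
  obtain ⟨π', d', hd', hbound⟩ := hB t (abs_le.1 (hR t ht))
  rw [(hdiff j t).deriv, (uniqueDiffWithinAt_Ioi t).eq_deriv _ ((hd t).right _) (hd'.right _)]
  exact hbound _

/-! ### Polynomials with prescribed coefficients -/

theorem exists_monotone_rootPoly_eq {F : Type*} [Field F] [LinearOrder F] {p : F[X]}
    (hmonic : p.Monic) (hsplits : p.Splits) {n : ℕ} (hn : p.natDegree = n) :
    ∃ v : Fin n → F, Monotone v ∧ rootPoly v = p := by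
  obtain ⟨l, hl : (l : Multiset F) = p.roots⟩ := Quot.exists_rep p.roots
  obtain rfl : l.length = n := by
    rw [← hn, hsplits.natDegree_eq_card_roots, ← hl, Multiset.coe_card]
  refine ⟨fun i => l.get (Tuple.sort l.get i), Tuple.monotone_sort l.get, ?_⟩
  rw [rootPoly_comp_perm, hsplits.eq_prod_roots_of_monic hmonic, ← hl, Multiset.map_coe,
    Multiset.prod_coe]
  exact Fin.prod_univ_fun_getElem l fun x => X - C x

theorem splits_of_forall_im_eq_zero {p : ℝ[X]} (h : ∀ z : ℂ, aeval z p = 0 → z.im = 0) :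
    p.Splits := by
  refine Splits.of_splits_map (algebraMap ℝ ℂ) (IsAlgClosed.splits _) fun z hz => ?_
  rw [mem_roots', IsRoot.def, eval_map_algebraMap] at hz
  exact ⟨z.re, Complex.ext rfl (h z hz.2).symm⟩

section

variable {R : Type*} [CommRing R] {n : ℕ}

theorem degree_sum_C_mul_X_pow_sub_lt (c : Fin n → R) :
    (∑ j : Fin n, C (c j) * X ^ (n - ((j : ℕ) + 1))).degree < (n : WithBot ℕ) := by
  rw [← mem_degreeLT]
  refine Submodule.sum_mem _ fun j _ => mem_degreeLT.2 ((degree_C_mul_X_pow_le _ _).trans_lt ?_)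
  exact_mod_cast Nat.sub_lt (Fin.pos j) (Nat.succ_pos j)

/-- The monic polynomial of degree `n` whose coefficients carry alternating signs, so that `a j` is
the elementary symmetric function of degree `j + 1` of its roots. -/
noncomputable def vietaPoly (a : Fin n → R) : R[X] :=
  X ^ n + ∑ j : Fin n, C ((-1) ^ ((j : ℕ) + 1) * a j) * X ^ (n - ((j : ℕ) + 1))

theorem aeval_vietaPoly {A : Type*} [CommRing A] [Algebra R A] (a : Fin n → R) (z : A) :
    aeval z (vietaPoly a) = z ^ n + ∑ j : Fin n,
      (-1) ^ ((j : ℕ) + 1) * algebraMap R A (a j) * z ^ (n - ((j : ℕ) + 1)) := by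
  simp [vietaPoly]

theorem monic_vietaPoly (a : Fin n → R) : (vietaPoly a).Monic :=
  monic_X_pow_add (degree_sum_C_mul_X_pow_sub_lt _)

theorem natDegree_vietaPoly [Nontrivial R] (a : Fin n → R) : (vietaPoly a).natDegree = n := by
  refine natDegree_eq_of_degree_eq_some ?_
  rw [vietaPoly, degree_add_eq_left_of_degree_lt, degree_X_pow]
  exact (degree_sum_C_mul_X_pow_sub_lt _).trans_eq (degree_X_pow n).symm

end

theorem contDiff_coeff_vietaPoly {n : ℕ} {m : WithTop ℕ∞} {a : Fin n → ℝ → ℝ}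
    (ha : ∀ j, ContDiff ℝ m (a j)) (k : ℕ) :
    ContDiff ℝ m fun t => (vietaPoly fun j => a j t).coeff k := by
  simp only [vietaPoly, coeff_add, finsetSum_coeff, coeff_C_mul]
  exact contDiff_const.add
    (ContDiff.sum fun j _ => (contDiff_const.mul (ha j)).mul contDiff_const)

/-- **Bronshtein's theorem.** If the coefficients `a j` of a curve of monic hyperbolic
polynomials `P t x = x ^ n + ∑ j, (-1) ^ (j+1) * a j t * x ^ (n - (j+1))` are of class `C^n`,
then the roots can be parameterized by differentiable functions `lam j` with locally bounded
derivatives. -/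
theorem bronshtein (n : ℕ) (hn : 1 ≤ n) (a : Fin n → ℝ → ℝ)
    (ha : ∀ j, ContDiff ℝ n (a j))
    (hhyp : ∀ t : ℝ, ∀ z : ℂ,
      z ^ n + ∑ j : Fin n, (-1 : ℂ) ^ ((j : ℕ) + 1) * (a j t : ℂ) * z ^ (n - ((j : ℕ) + 1)) = 0 →
        z.im = 0) :
    ∃ lam : Fin n → ℝ → ℝ,
      (∀ j, Differentiable ℝ (lam j)) ∧
      (∀ j, ∀ K : Set ℝ, IsCompact K → ∃ C : ℝ, ∀ t ∈ K, |deriv (lam j) t| ≤ C) ∧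
      (∀ t x : ℝ,
        x ^ n + ∑ j : Fin n, (-1 : ℝ) ^ ((j : ℕ) + 1) * a j t * x ^ (n - ((j : ℕ) + 1)) =
          ∏ j : Fin n, (x - lam j t)) := by
  have hsplits (t : ℝ) : (vietaPoly fun j => a j t).Splits :=
    splits_of_forall_im_eq_zero fun z hz => hhyp t z <| by
      simpa only [aeval_vietaPoly, Complex.coe_algebraMap] using hz
  choose L hmono hL using fun t =>
    exists_monotone_rootPoly_eq (monic_vietaPoly _) (hsplits t) (natDegree_vietaPoly _)
  have hcurve : IsOrderedRootCurve L := ⟨hmono, fun k => by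
    simpa only [hL, Fintype.card_fin] using contDiff_coeff_vietaPoly ha k⟩
  obtain ⟨σ, hdiff, hbound⟩ := hcurve.exists_perm_differentiable
  refine ⟨fun j t => L t (σ t j), hdiff, fun j K hK => ?_, fun t x => ?_⟩
  · obtain ⟨B, hB⟩ := hbound K hK
    exact ⟨B, hB j⟩
  · have heval := congrArg (aeval x) ((rootPoly_comp_perm (L t) (σ t)).trans (hL t))
    rw [aeval_vietaPoly, coe_aeval_eq_eval, eval_rootPoly] at heval
    simpa only [Algebra.algebraMap_self, RingHom.id_apply] using heval.symm
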